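/- arXiv:0911.4683 — 2 statements merged into one kernel-verified Lean document; each statement's English description precedes it below -/
import Mathlib

section
/- Let μ be a Borel measure on ℝ with μ({0}) = 0 and ∫_ℝ min(1,u²) μ(du) < ∞, satisfying μ((0,∞)) = +∞, ∫_{|u|≥1} e^{Cu} μ(du) < ∞ for every C ∈ ℝ, and conditions (T1) and (T2). Fix λ > 0 and define Ψ(z) = ∫_{−∞}^0 ∫_ℝ (e^{−iz e^{λs} u} − 1 + iz e^{λs} u) μ(du) ds, p(x) = (1/2π) ∫_ℝ e^{ixz + Ψ(z)} dz, 𝓜_k(ζ) = ∫_{−∞}^0 e^{kλs} M_k(e^{λs} ζ) ds, and for x ≥ 0 let ζ(x) be the unique ζ ≥ 0 with 𝓜₁(ζ) = x. Then for every bounded set A ⊆ ℝ, sup_{a ∈ A} | (p(x+a)/p(x)) · e^{a·ζ(x)} − 1 | → 0 as x → +∞. -/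
open MeasureTheory Filter Set

/-- The exponential moment functions `M_k` of a Lévy measure `μ`. -/
noncomputable def levyM (μ : Measure ℝ) : ℕ → ℝ → ℝ
  | 0, ξ => ∫ u, (Real.exp (ξ * u) - 1 - ξ * u) ∂μ
  | 1, ξ => ∫ u, u * (Real.exp (ξ * u) - 1) ∂μ
  | (n + 2), ξ => ∫ u, u ^ (n + 2) * Real.exp (ξ * u) ∂μ

/-- `𝓜_k(ζ) = ∫_{−∞}^0 e^{kλs} M_k(e^{λs}ζ) ds`, the moment functions of the
Ornstein–Uhlenbeck kernel `f(s) = e^{λs}` on `(−∞,0]`. -/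
noncomputable def ouM (μ : Measure ℝ) (lam : ℝ) (k : ℕ) (ξ : ℝ) : ℝ :=
  ∫ s in Set.Iic (0 : ℝ), (Real.exp (lam * s)) ^ k * levyM μ k (Real.exp (lam * s) * ξ)

/-- `Ψ(z) = ∫_{−∞}^0 ∫_ℝ (e^{−ize^{λs}u} − 1 + ize^{λs}u) μ(du) ds`. -/
noncomputable def ouPsi (μ : Measure ℝ) (lam : ℝ) (z : ℂ) : ℂ :=
  ∫ s in Set.Iic (0 : ℝ), ∫ u,
    (Complex.exp (-(Complex.I * z * ((Real.exp (lam * s) * u : ℝ) : ℂ))) - 1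
      + Complex.I * z * ((Real.exp (lam * s) * u : ℝ) : ℂ)) ∂μ

/-- exponential integrability -/
def ExpInt (ν : Measure ℝ) : Prop :=
  ∀ R : ℝ, Integrable (fun v : ℝ => v ^ 2 * Real.exp (R * |v|)) ν

/-- the Lévy exponent -/
noncomputable def PS (ν : Measure ℝ) (w : ℂ) : ℂ :=
  ∫ v, (Complex.exp (-(Complex.I * w * ((v : ℝ) : ℂ))) - 1 + Complex.I * w * ((v : ℝ) : ℂ)) ∂ν

/-- minus the real part of the tilted exponent -/
noncomputable def FF (ν : Measure ℝ) (ζ z : ℝ) : ℝ :=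
  ∫ v, (1 - Real.cos (z * v)) * Real.exp (ζ * v) ∂ν

/-- the tilted exponent -/
noncomputable def GG (ν : Measure ℝ) (ζ z : ℝ) : ℂ :=
  ∫ v, (Complex.exp (-(Complex.I * z * ((v : ℝ) : ℂ))) - 1 + Complex.I * z * ((v : ℝ) : ℂ))
    * ((Real.exp (ζ * v) : ℝ) : ℂ) ∂ν

lemma norm_exp_sub_one_sub_le (w : ℂ) : ‖Complex.exp w - 1 - w‖ ≤ ‖w‖ ^ 2 * Real.exp ‖w‖ := by
  have := Complex.norm_exp_sub_sum_le_norm_mul_exp w 2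
  simp only [Finset.sum_range_succ, Finset.sum_range_zero, zero_add, pow_zero, pow_one,
    Nat.factorial, Nat.cast_one, div_one, mul_one] at this
  rwa [← sub_sub] at this

lemma norm_exp_sub_one_le' (w : ℂ) : ‖Complex.exp w - 1‖ ≤ ‖w‖ * Real.exp ‖w‖ := by
  have := Complex.norm_exp_sub_sum_le_norm_mul_exp w 1
  simpa using this

lemma abs_exp_sub_one_sub_le (x : ℝ) : |Real.exp x - 1 - x| ≤ x ^ 2 * Real.exp |x| := by
  have := norm_exp_sub_one_sub_le (x : ℂ)
  rw [← Complex.ofReal_exp, ← Complex.ofReal_one, ← Complex.ofReal_sub, ← Complex.ofReal_sub,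
    Complex.norm_real, Complex.norm_real, Real.norm_eq_abs, Real.norm_eq_abs, sq_abs] at this
  exact this

lemma abs_exp_sub_one_le' (x : ℝ) : |Real.exp x - 1| ≤ |x| * Real.exp |x| := by
  have := norm_exp_sub_one_le' (x : ℂ)
  rw [← Complex.ofReal_exp, ← Complex.ofReal_one, ← Complex.ofReal_sub,
    Complex.norm_real, Complex.norm_real, Real.norm_eq_abs, Real.norm_eq_abs] at this
  exact this

lemma exp_mul_le_abs (ζ v : ℝ) : Real.exp (ζ * v) ≤ Real.exp (|ζ| * |v|) := by
  rw [← abs_mul]; exact Real.exp_le_exp.2 (le_abs_self _)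

lemma psi_bound (w : ℂ) (v : ℝ) :
    ‖Complex.exp (-(Complex.I * w * ((v : ℝ) : ℂ))) - 1 + Complex.I * w * ((v : ℝ) : ℂ)‖ ≤
      ‖w‖ ^ 2 * (v ^ 2 * Real.exp (‖w‖ * |v|)) := by
  have := norm_exp_sub_one_sub_le (-(Complex.I * w * ((v : ℝ) : ℂ)))
  rw [sub_neg_eq_add, norm_neg, norm_mul, norm_mul, Complex.norm_I, one_mul, Complex.norm_real,
    Real.norm_eq_abs, mul_pow, sq_abs] at this
  rw [← mul_assoc]
  exact this

lemma pow4_bound (v : ℝ) : v ^ 4 ≤ v ^ 2 * (2 * Real.exp |v|) := by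
  have h : |v| ^ 2 / 2 ≤ Real.exp |v| := by
    have := Real.quadratic_le_exp_of_nonneg (abs_nonneg v)
    have h2 := abs_nonneg v
    linarith
  rw [sq_abs] at h
  have : v ^ 4 = v ^ 2 * v ^ 2 := by ring
  rw [this]
  exact mul_le_mul_of_nonneg_left (by linarith) (sq_nonneg _)

lemma ExpInt.of_bound {E : Type*} [NormedAddCommGroup E] {ν : Measure ℝ} (h : ExpInt ν)
    {f : ℝ → E} (hf : AEStronglyMeasurable f ν) (C R : ℝ)
    (hb : ∀ v, ‖f v‖ ≤ C * (v ^ 2 * Real.exp (R * |v|))) : Integrable f ν :=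
  ((h R).const_mul C).mono' hf (Eventually.of_forall hb)

lemma ExpInt.i_psi {ν : Measure ℝ} (h : ExpInt ν) (w : ℂ) : Integrable (fun v : ℝ =>
    Complex.exp (-(Complex.I * w * ((v : ℝ) : ℂ))) - 1 + Complex.I * w * ((v : ℝ) : ℂ)) ν :=
  h.of_bound (Continuous.aestronglyMeasurable (by fun_prop)) (‖w‖ ^ 2) ‖w‖ (psi_bound w)

lemma ExpInt.i_two {ν : Measure ℝ} (h : ExpInt ν) (ζ : ℝ) :
    Integrable (fun v : ℝ => v ^ 2 * Real.exp (ζ * v)) ν :=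
  h.of_bound (Continuous.aestronglyMeasurable (by fun_prop)) 1 |ζ| (fun v => by
    rw [Real.norm_eq_abs, abs_of_nonneg (by positivity), one_mul]
    exact mul_le_mul_of_nonneg_left (exp_mul_le_abs _ _) (sq_nonneg _))

lemma four_bound (ζ v : ℝ) :
    v ^ 4 * Real.exp (ζ * v) ≤ 2 * (v ^ 2 * Real.exp ((|ζ| + 1) * |v|)) := by
  calc v ^ 4 * Real.exp (ζ * v) ≤ (v ^ 2 * (2 * Real.exp |v|)) * Real.exp (|ζ| * |v|) :=
        mul_le_mul (pow4_bound v) (exp_mul_le_abs _ _) (Real.exp_pos _).le (by positivity)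
    _ = _ := by rw [add_mul, Real.exp_add, one_mul]; ring

lemma ExpInt.i_four {ν : Measure ℝ} (h : ExpInt ν) (ζ : ℝ) :
    Integrable (fun v : ℝ => v ^ 4 * Real.exp (ζ * v)) ν :=
  h.of_bound (Continuous.aestronglyMeasurable (by fun_prop)) 2 (|ζ| + 1) (fun v => by
    rw [Real.norm_eq_abs, abs_of_nonneg (by positivity)]
    exact four_bound ζ v)

lemma ExpInt.i_one {ν : Measure ℝ} (h : ExpInt ν) (ζ : ℝ) :
    Integrable (fun v : ℝ => v * (Real.exp (ζ * v) - 1)) ν :=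
  h.of_bound (Continuous.aestronglyMeasurable (by fun_prop)) |ζ| |ζ| (fun v => by
    rw [Real.norm_eq_abs, abs_mul]
    have := abs_exp_sub_one_le' (ζ * v)
    rw [abs_mul] at this
    calc |v| * |Real.exp (ζ * v) - 1| ≤ |v| * (|ζ| * |v| * Real.exp (|ζ| * |v|)) := by gcongr
      _ = _ := by rw [← sq_abs v]; ring)

lemma ExpInt.i_zero {ν : Measure ℝ} (h : ExpInt ν) (ζ : ℝ) :
    Integrable (fun v : ℝ => Real.exp (ζ * v) - 1 - ζ * v) ν :=
  h.of_bound (Continuous.aestronglyMeasurable (by fun_prop)) (ζ ^ 2) |ζ| (fun v => by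
    rw [Real.norm_eq_abs]
    have := abs_exp_sub_one_sub_le (ζ * v)
    rw [abs_mul, mul_pow, mul_assoc] at this
    exact this)

lemma one_sub_cos_le (x : ℝ) : 1 - Real.cos x ≤ x ^ 2 / 2 := by
  have := Real.one_sub_sq_div_two_le_cos (x := x)
  linarith

lemma FF_bound (ζ z v : ℝ) : (1 - Real.cos (z * v)) * Real.exp (ζ * v) ≤
    z ^ 2 / 2 * (v ^ 2 * Real.exp (|ζ| * |v|)) := by
  calc (1 - Real.cos (z * v)) * Real.exp (ζ * v) ≤ ((z * v) ^ 2 / 2) * Real.exp (|ζ| * |v|) :=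
        mul_le_mul (one_sub_cos_le _) (exp_mul_le_abs _ _) (Real.exp_pos _).le (by positivity)
    _ = _ := by ring

lemma FF_nonneg' (ζ z v : ℝ) : 0 ≤ (1 - Real.cos (z * v)) * Real.exp (ζ * v) :=
  mul_nonneg (by linarith [Real.cos_le_one (z * v)]) (Real.exp_pos _).le

lemma ExpInt.i_FF {ν : Measure ℝ} (h : ExpInt ν) (ζ z : ℝ) :
    Integrable (fun v : ℝ => (1 - Real.cos (z * v)) * Real.exp (ζ * v)) ν :=
  h.of_bound (Continuous.aestronglyMeasurable (by fun_prop)) (z ^ 2 / 2) |ζ| (fun v => by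
    rw [Real.norm_eq_abs, abs_of_nonneg (FF_nonneg' _ _ _)]
    exact FF_bound ζ z v)

lemma ExpInt.i_GG {ν : Measure ℝ} (h : ExpInt ν) (ζ z : ℝ) :
    Integrable (fun v : ℝ => (Complex.exp (-(Complex.I * z * ((v : ℝ) : ℂ))) - 1
      + Complex.I * z * ((v : ℝ) : ℂ)) * ((Real.exp (ζ * v) : ℝ) : ℂ)) ν :=
  h.of_bound (Continuous.aestronglyMeasurable (by fun_prop)) (‖(z : ℂ)‖ ^ 2) (‖(z : ℂ)‖ + |ζ|)
    (fun v => by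
      rw [norm_mul, Complex.norm_real, Real.norm_eq_abs (Real.exp _), abs_of_pos (Real.exp_pos _)]
      calc _ ≤ (‖(z : ℂ)‖ ^ 2 * (v ^ 2 * Real.exp (‖(z : ℂ)‖ * |v|))) * Real.exp (|ζ| * |v|) :=
            mul_le_mul (psi_bound _ v) (exp_mul_le_abs _ _) (Real.exp_pos _).le (by positivity)
        _ = _ := by rw [add_mul, Real.exp_add]; ring)

/-- The tilting identity. -/
lemma PS_shift {ν : Measure ℝ} (h : ExpInt ν) (ζ z : ℝ) :
    PS ν (z + ζ * Complex.I) = GG ν ζ z + levyM ν 0 ζ - Complex.I * z * levyM ν 1 ζ := by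
  unfold PS GG levyM
  rw [← integral_complex_ofReal, ← integral_complex_ofReal, ← integral_const_mul]
  have i0 : Integrable (fun v : ℝ => ((Real.exp (ζ * v) - 1 - ζ * v : ℝ) : ℂ)) ν :=
    (h.i_zero ζ).ofReal
  have i1 : Integrable (fun v : ℝ => Complex.I * z * ((v * (Real.exp (ζ * v) - 1) : ℝ) : ℂ)) ν :=
    (h.i_one ζ).ofReal.const_mul _
  have i01 : Integrable (fun v : ℝ => (Complex.exp (-(Complex.I * z * ((v : ℝ) : ℂ))) - 1
      + Complex.I * z * ((v : ℝ) : ℂ)) * ((Real.exp (ζ * v) : ℝ) : ℂ)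
      + ((Real.exp (ζ * v) - 1 - ζ * v : ℝ) : ℂ)) ν := (h.i_GG ζ z).add i0
  rw [← integral_add (h.i_GG ζ z) i0, ← integral_sub i01 i1]
  congr 1
  ext v
  have : Complex.exp (-(Complex.I * (z + ζ * Complex.I) * v)) =
      Complex.exp (-(Complex.I * z * v)) * Complex.exp (ζ * v) := by
    rw [← Complex.exp_add]; congr 1; ring_nf; rw [Complex.I_sq]; ring
  rw [this]
  push_cast
  linear_combination (ζ * v : ℂ) * Complex.I_sq

lemma GG_re {ν : Measure ℝ} (h : ExpInt ν) (ζ z : ℝ) : (GG ν ζ z).re = - FF ν ζ z := by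
  unfold GG FF
  have := integral_re (𝕜 := ℂ) (h.i_GG ζ z)
  simp only [RCLike.re_to_complex] at this
  rw [← this, ← integral_neg]
  congr 1
  ext v
  have e : -(Complex.I * (z : ℂ) * (v : ℂ)) = ((-(z * v) : ℝ) : ℂ) * Complex.I := by
    push_cast; ring
  rw [Complex.re_mul_ofReal, Complex.add_re, Complex.sub_re, e, Complex.exp_ofReal_mul_I_re,
    Real.cos_neg]
  simp
  ring

lemma FF_nonneg {ν : Measure ℝ} (ζ z : ℝ) : 0 ≤ FF ν ζ z :=
  integral_nonneg (fun v => FF_nonneg' ζ z v)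

lemma cos_lower (x : ℝ) : x ^ 2 / 2 - x ^ 4 / 2 ≤ 1 - Real.cos x := by
  by_cases hx : |x| ≤ 1
  · have := abs_le.1 (Real.cos_bound hx)
    have e : |x| ^ 4 = x ^ 4 := by rw [show 4 = 2 * 2 from rfl, pow_mul, sq_abs, ← pow_mul]
    rw [e] at this
    have : 0 ≤ x ^ 4 := by positivity
    linarith
  · push Not at hx
    have : 1 ≤ x ^ 2 := by rw [← sq_abs]; nlinarith
    have := Real.cos_le_one x
    nlinarith

lemma m2_eq (ν : Measure ℝ) (ζ : ℝ) : levyM ν 2 ζ = ∫ v, v ^ 2 * Real.exp (ζ * v) ∂ν := rfl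
lemma m4_eq (ν : Measure ℝ) (ζ : ℝ) : levyM ν 4 ζ = ∫ v, v ^ 4 * Real.exp (ζ * v) ∂ν := rfl

lemma m4_nonneg (ν : Measure ℝ) (ζ : ℝ) : 0 ≤ levyM ν 4 ζ := by
  rw [m4_eq]; exact integral_nonneg (fun v => by positivity)

lemma m2_nonneg (ν : Measure ℝ) (ζ : ℝ) : 0 ≤ levyM ν 2 ζ := by
  rw [m2_eq]; exact integral_nonneg (fun v => by positivity)

lemma FF_lower {ν : Measure ℝ} (h : ExpInt ν) (ζ z : ℝ) :
    z ^ 2 * levyM ν 2 ζ / 2 - z ^ 4 * levyM ν 4 ζ / 2 ≤ FF ν ζ z := by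
  have e : z ^ 2 * levyM ν 2 ζ / 2 - z ^ 4 * levyM ν 4 ζ / 2 =
      ∫ v, (z ^ 2 / 2) * (v ^ 2 * Real.exp (ζ * v)) - (z ^ 4 / 2) * (v ^ 4 * Real.exp (ζ * v)) ∂ν := by
    rw [integral_sub ((h.i_two ζ).const_mul _) ((h.i_four ζ).const_mul _), integral_const_mul,
      integral_const_mul, m2_eq, m4_eq]; ring
  rw [e]
  refine integral_mono (((h.i_two ζ).const_mul _).sub ((h.i_four ζ).const_mul _)) (h.i_FF ζ z) ?_
  intro v
  have := mul_le_mul_of_nonneg_right (cos_lower (z * v)) (Real.exp_pos (ζ * v)).le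
  calc _ = ((z * v) ^ 2 / 2 - (z * v) ^ 4 / 2) * Real.exp (ζ * v) := by ring
    _ ≤ _ := this

lemma third_bound (θ : ℝ) : ‖Complex.exp (-(Complex.I * θ)) - 1 + Complex.I * θ + (θ : ℂ) ^ 2 / 2‖
    ≤ 4 * |θ| ^ 3 := by
  by_cases hx : |θ| ≤ 1
  · have hn : ‖-(Complex.I * (θ : ℂ))‖ = |θ| := by
      rw [norm_neg, norm_mul, Complex.norm_I, one_mul, Complex.norm_real, Real.norm_eq_abs]
    have := Complex.exp_bound (x := -(Complex.I * θ)) (by rw [hn]; exact hx) (n := 3) (by norm_num)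
    rw [hn] at this
    simp only [Finset.sum_range_succ, Finset.sum_range_zero, zero_add, pow_zero, pow_one,
      Nat.factorial] at this
    have e : Complex.exp (-(Complex.I * θ)) - 1 + Complex.I * θ + (θ : ℂ) ^ 2 / 2 =
      Complex.exp (-(Complex.I * θ)) - (1 / ((1 : ℕ) : ℂ) + -(Complex.I * θ) / (((0 + 1) * 1 : ℕ) : ℂ)
        + (-(Complex.I * θ)) ^ 2 / (((1 + 1) * ((0 + 1) * 1) : ℕ) : ℂ)) := by
      push_cast
      linear_combination (θ : ℂ) ^ 2 / 2 * Complex.I_sq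
    rw [e]
    refine this.trans ?_
    have : 0 ≤ |θ| ^ 3 := by positivity
    norm_num
    linarith
  · push Not at hx
    have h1 : ‖Complex.exp (-(Complex.I * θ))‖ = 1 := by
      rw [show -(Complex.I * (θ : ℂ)) = ((-θ : ℝ) : ℂ) * Complex.I by push_cast; ring]
      exact Complex.norm_exp_ofReal_mul_I _
    have h2 : ‖Complex.I * (θ : ℂ)‖ = |θ| := by
      rw [norm_mul, Complex.norm_I, one_mul, Complex.norm_real, Real.norm_eq_abs]
    have h3 : ‖(θ : ℂ) ^ 2 / 2‖ = |θ| ^ 2 / 2 := by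
      rw [norm_div, norm_pow, Complex.norm_real, Real.norm_eq_abs]; simp
    calc _ ≤ ‖Complex.exp (-(Complex.I * θ)) - 1 + Complex.I * θ‖ + ‖(θ : ℂ) ^ 2 / 2‖ := norm_add_le _ _
      _ ≤ (‖Complex.exp (-(Complex.I * θ)) - 1‖ + ‖Complex.I * (θ : ℂ)‖) + ‖(θ : ℂ) ^ 2 / 2‖ := by
          gcongr; exact norm_add_le _ _
      _ ≤ ((‖Complex.exp (-(Complex.I * θ))‖ + ‖(1 : ℂ)‖) + ‖Complex.I * (θ : ℂ)‖)
            + ‖(θ : ℂ) ^ 2 / 2‖ := by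
          gcongr; exact norm_sub_le _ _
      _ = (1 + 1 + |θ|) + |θ| ^ 2 / 2 := by rw [h1, h2, h3, norm_one]
      _ ≤ 4 * |θ| ^ 3 := by nlinarith [mul_pos (sub_pos.2 hx) (sub_pos.2 hx)]

lemma GG_approx {ν : Measure ℝ} (h : ExpInt ν) (ζ z ε : ℝ) (hε : 0 < ε) :
    ‖GG ν ζ z + ((z ^ 2 * levyM ν 2 ζ / 2 : ℝ) : ℂ)‖ ≤
      2 * ε * (z ^ 2 * levyM ν 2 ζ) + 2 / ε * (z ^ 4 * levyM ν 4 ζ) := by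
  have e2 : ((z ^ 2 * levyM ν 2 ζ / 2 : ℝ) : ℂ) =
      ∫ v, ((z ^ 2 / 2 * (v ^ 2 * Real.exp (ζ * v)) : ℝ) : ℂ) ∂ν := by
    rw [integral_complex_ofReal, integral_const_mul, m2_eq]; congr 1; ring
  have e3 : 2 * ε * (z ^ 2 * levyM ν 2 ζ) + 2 / ε * (z ^ 4 * levyM ν 4 ζ) =
      ∫ v, (2 * ε * z ^ 2) * (v ^ 2 * Real.exp (ζ * v))
        + (2 / ε * z ^ 4) * (v ^ 4 * Real.exp (ζ * v)) ∂ν := by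
    rw [integral_add ((h.i_two ζ).const_mul _) ((h.i_four ζ).const_mul _), integral_const_mul,
      integral_const_mul, m2_eq, m4_eq]; ring
  have i2 : Integrable (fun v : ℝ => ((z ^ 2 / 2 * (v ^ 2 * Real.exp (ζ * v)) : ℝ) : ℂ)) ν :=
    ((h.i_two ζ).const_mul _).ofReal
  rw [e2, e3, GG, ← integral_add (h.i_GG ζ z) i2]
  refine norm_integral_le_of_norm_le
    (((h.i_two ζ).const_mul _).add ((h.i_four ζ).const_mul _)) (Eventually.of_forall fun v => ?_)
  have t := third_bound (z * v)
  have e : (Complex.exp (-(Complex.I * z * ((v : ℝ) : ℂ))) - 1 + Complex.I * z * ((v : ℝ) : ℂ))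
    * ((Real.exp (ζ * v) : ℝ) : ℂ) + ((z ^ 2 / 2 * (v ^ 2 * Real.exp (ζ * v)) : ℝ) : ℂ) =
    (Complex.exp (-(Complex.I * (z * v : ℝ))) - 1 + Complex.I * (z * v : ℝ) + ((z * v : ℝ) : ℂ) ^ 2 / 2)
      * ((Real.exp (ζ * v) : ℝ) : ℂ) := by
    push_cast
    rw [mul_assoc Complex.I]
    ring
  rw [e, norm_mul, Complex.norm_real, Real.norm_eq_abs, abs_of_pos (Real.exp_pos _)]
  have k : 4 * |z * v| ^ 3 ≤ 2 * ε * (z * v) ^ 2 + 2 / ε * (z * v) ^ 4 := by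
    have a : |z * v| ^ 4 = (z * v) ^ 4 := by
      rw [show 4 = 2 * 2 from rfl, pow_mul, sq_abs, ← pow_mul]
    rw [← a, ← sq_abs (z * v)]
    set y := |z * v|
    have hh : 2 * ε * y ^ 2 + 2 / ε * y ^ 4 - 4 * y ^ 3 = 2 / ε * (y * (ε - y)) ^ 2 := by
      field_simp; ring
    have : 0 ≤ 2 / ε * (y * (ε - y)) ^ 2 := by positivity
    linarith
  calc _ ≤ (2 * ε * (z * v) ^ 2 + 2 / ε * (z * v) ^ 4) * Real.exp (ζ * v) :=
        mul_le_mul_of_nonneg_right (t.trans k) (Real.exp_pos _).le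
    _ = _ := by ring

lemma PS_differentiable {ν : Measure ℝ} (h : ExpInt ν) : Differentiable ℂ (PS ν) := by
  intro w₀
  have key := hasDerivAt_integral_of_dominated_loc_of_deriv_le (μ := ν) (𝕜 := ℂ)
    (F := fun (w : ℂ) (v : ℝ) =>
      Complex.exp (-(Complex.I * w * ((v : ℝ) : ℂ))) - 1 + Complex.I * w * ((v : ℝ) : ℂ))
    (F' := fun (w : ℂ) (v : ℝ) =>
      -(Complex.I * v) * (Complex.exp (-(Complex.I * w * ((v : ℝ) : ℂ))) - 1))
    (x₀ := w₀) (s := Metric.ball w₀ 1)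
    (bound := fun v => (‖w₀‖ + 1) * (v ^ 2 * Real.exp ((‖w₀‖ + 1) * |v|)))
    (Metric.ball_mem_nhds _ one_pos)
    (Eventually.of_forall fun w => Continuous.aestronglyMeasurable (by fun_prop))
    (h.i_psi w₀) (Continuous.aestronglyMeasurable (by fun_prop))
    (Eventually.of_forall fun v w hw => ?_) ((h _).const_mul _)
    (Eventually.of_forall fun v w _ => ?_)
  · exact key.2.differentiableAt
  · have hw' : ‖w‖ ≤ ‖w₀‖ + 1 := by
      have : ‖w - w₀‖ < 1 := by simpa [dist_eq_norm] using hw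
      have := norm_sub_norm_le w w₀
      linarith
    have b := norm_exp_sub_one_le' (-(Complex.I * w * ((v : ℝ) : ℂ)))
    rw [norm_neg, norm_mul, norm_mul, Complex.norm_I, one_mul, Complex.norm_real,
      Real.norm_eq_abs] at b
    rw [norm_mul, norm_neg, norm_mul, Complex.norm_I, one_mul, Complex.norm_real,
      Real.norm_eq_abs]
    calc _ ≤ |v| * (‖w‖ * |v| * Real.exp (‖w‖ * |v|)) := by gcongr
      _ ≤ |v| * ((‖w₀‖ + 1) * |v| * Real.exp ((‖w₀‖ + 1) * |v|)) := by gcongr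
      _ = _ := by rw [← sq_abs v]; ring
  · have h1 : HasDerivAt (fun w : ℂ => Complex.I * w * (v : ℂ)) (Complex.I * v) w := by
      simpa using ((hasDerivAt_id w).const_mul Complex.I).mul_const (v : ℂ)
    have := ((h1.neg.cexp).sub_const 1).add h1
    refine this.congr_deriv ?_
    simp only [Pi.neg_apply]
    ring

/-- decay hypothesis -/
def DecayC (ν : Measure ℝ) : Prop :=
  ∃ C : ℝ, 0 < C ∧ ∀ ζ : ℝ, 0 ≤ ζ → ∀ z : ℝ, Real.exp (-FF ν ζ z / 2) ≤ C * (1 + z ^ 2)⁻¹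

lemma norm_exp_PS {ν : Measure ℝ} (h : ExpInt ν) (x ζ z : ℝ) :
    ‖Complex.exp (Complex.I * x * (z + ζ * Complex.I) + PS ν (z + ζ * Complex.I))‖ =
      Real.exp (- x * ζ + levyM ν 0 ζ - FF ν ζ z) := by
  rw [Complex.norm_exp, PS_shift h]
  congr 1
  have := GG_re h ζ z
  simp [this]
  ring

lemma m0_le {ν : Measure ℝ} (h : ExpInt ν) {η ζ : ℝ} (h0 : 0 ≤ η) (h1 : η ≤ ζ) :
    levyM ν 0 η ≤ ∫ v, ζ ^ 2 * (v ^ 2 * Real.exp (ζ * |v|)) ∂ν := by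
  unfold levyM
  refine integral_mono (h.i_zero η) ((h ζ).const_mul _) fun v => ?_
  have := (le_abs_self _).trans (abs_exp_sub_one_sub_le (η * v))
  calc _ ≤ (η * v) ^ 2 * Real.exp |η * v| := this
    _ = η ^ 2 * (v ^ 2 * Real.exp (η * |v|)) := by rw [abs_mul, abs_of_nonneg h0]; ring
    _ ≤ _ := by gcongr

lemma unif_bound {ν : Measure ℝ} (h : ExpInt ν) (hd : DecayC ν) (x ζ : ℝ) :
    ∃ C : ℝ, ∀ η, 0 ≤ η → η ≤ ζ → ∀ z : ℝ,
      ‖Complex.exp (Complex.I * x * (z + η * Complex.I) + PS ν (z + η * Complex.I))‖ ≤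
        C * (1 + z ^ 2)⁻¹ := by
  obtain ⟨C, hC, hC'⟩ := hd
  refine ⟨Real.exp (|x| * ζ + ∫ v, ζ ^ 2 * (v ^ 2 * Real.exp (ζ * |v|)) ∂ν) * C, ?_⟩
  intro η h0 h1 z
  rw [norm_exp_PS h, mul_assoc]
  have a : - x * η ≤ |x| * ζ :=
    mul_le_mul (neg_le_abs x) h1 h0 (abs_nonneg _)
  have b := m0_le h h0 h1
  have c := FF_nonneg (ν := ν) η z
  calc Real.exp (- x * η + levyM ν 0 η - FF ν η z)
      ≤ Real.exp ((|x| * ζ + ∫ v, ζ ^ 2 * (v ^ 2 * Real.exp (ζ * |v|)) ∂ν) + (-FF ν η z / 2)) :=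
        Real.exp_le_exp.2 (by linarith)
    _ = Real.exp (|x| * ζ + ∫ v, ζ ^ 2 * (v ^ 2 * Real.exp (ζ * |v|)) ∂ν)
          * Real.exp (-FF ν η z / 2) := Real.exp_add _ _
    _ ≤ _ := by gcongr; exact hC' η h0 z

lemma contour {ν : Measure ℝ} (h : ExpInt ν) (hd : DecayC ν) (x ζ : ℝ) (hζ : 0 ≤ ζ) :
    ∫ z : ℝ, Complex.exp (Complex.I * x * z + PS ν z) =
      ∫ z : ℝ, Complex.exp (Complex.I * x * (z + ζ * Complex.I) + PS ν (z + ζ * Complex.I)) := by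
  obtain ⟨C, hC⟩ := unif_bound h hd x ζ
  set f : ℂ → ℂ := fun w => Complex.exp (Complex.I * x * w + PS ν w) with hf
  have fd : Differentiable ℂ f := by
    have := PS_differentiable h
    fun_prop
  have fc : Continuous f := fd.continuous
  have I0 : ∀ η, 0 ≤ η → η ≤ ζ → Integrable (fun z : ℝ => f (z + η * Complex.I)) := by
    intro η h0 h1
    refine (integrable_inv_one_add_sq.const_mul C).mono'
      (Continuous.aestronglyMeasurable (by fun_prop)) (Eventually.of_forall fun z => hC η h0 h1 z)
  have T0 := intervalIntegral_tendsto_integral (I0 0 le_rfl hζ)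
    (tendsto_neg_atTop_atBot) (tendsto_id (α := ℝ) (x := atTop))
  have T1 := intervalIntegral_tendsto_integral (I0 ζ hζ le_rfl)
    (tendsto_neg_atTop_atBot) (tendsto_id (α := ℝ) (x := atTop))
  have V : ∀ ε : ℝ, ε ^ 2 = 1 → Tendsto (fun R : ℝ => Complex.I • ∫ y in (0:ℝ)..ζ,
      f (((ε * R : ℝ) : ℂ) + y * Complex.I)) atTop (nhds 0) := by
    intro ε hε
    have t : Tendsto (fun R : ℝ => C * (1 + R ^ 2)⁻¹ * |ζ - 0|) atTop (nhds 0) := by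
      have : Tendsto (fun R : ℝ => (1 + R ^ 2)⁻¹) atTop (nhds 0) :=
        tendsto_inv_atTop_zero.comp
          (tendsto_atTop_add_const_left _ _ (tendsto_pow_atTop (by norm_num)))
      simpa using (this.const_mul C).mul_const |ζ - 0|
    refine squeeze_zero_norm (fun R => ?_) t
    rw [norm_smul, Complex.norm_I, one_mul]
    refine intervalIntegral.norm_integral_le_of_norm_le_const fun y hy => ?_
    rw [uIoc_of_le hζ] at hy
    have := hC y hy.1.le hy.2 (ε * R)
    rwa [mul_pow, hε, one_mul] at this
  have key : ∀ R : ℝ, (∫ z in (-R)..R, f (z + (0:ℝ) * Complex.I)) -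
      (∫ z in (-R)..R, f (z + ζ * Complex.I)) +
      (Complex.I • ∫ y in (0:ℝ)..ζ, f (((1 * R : ℝ) : ℂ) + y * Complex.I)) -
      (Complex.I • ∫ y in (0:ℝ)..ζ, f (((-1 * R : ℝ) : ℂ) + y * Complex.I)) = 0 := by
    intro R
    have := Complex.integral_boundary_rect_eq_zero_of_differentiableOn f
      (⟨-R, 0⟩ : ℂ) (⟨R, ζ⟩ : ℂ) fd.differentiableOn
    simpa using this
  have lim := ((T0.sub T1).add (V 1 (by norm_num))).sub (V (-1) (by norm_num))
  have lim0 := tendsto_nhds_unique (lim.congr fun R => key R) tendsto_const_nhds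
  have e : ∫ z : ℝ, f z = ∫ z : ℝ, f (z + ζ * Complex.I) := by
    have := lim0
    simp only [Complex.ofReal_zero, zero_mul, add_zero, sub_zero] at this
    exact sub_eq_zero.1 this
  exact e

lemma main_identity {ν : Measure ℝ} (h : ExpInt ν) (hd : DecayC ν) (x ζ : ℝ) (hζ : 0 ≤ ζ) :
    ∫ z : ℝ, Complex.exp (Complex.I * x * z + PS ν z) =
      ((Real.exp (-x * ζ + levyM ν 0 ζ) : ℝ) : ℂ) *
        ∫ z : ℝ, Complex.exp (Complex.I * ((x - levyM ν 1 ζ) * z : ℝ)) * Complex.exp (GG ν ζ z) := by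
  rw [contour h hd x ζ hζ, ← integral_const_mul]
  congr 1
  ext z
  rw [PS_shift h, Complex.ofReal_exp, ← Complex.exp_add, ← Complex.exp_add]
  congr 1
  push_cast
  linear_combination (x * ζ : ℂ) * Complex.I_sq

lemma GG_continuous {ν : Measure ℝ} (h : ExpInt ν) (ζ : ℝ) : Continuous (fun z => GG ν ζ z) := by
  have e : ∀ z : ℝ, GG ν ζ z = PS ν (z + ζ * Complex.I) - levyM ν 0 ζ
      + Complex.I * z * levyM ν 1 ζ := fun z => by rw [PS_shift h]; ring
  have := (PS_differentiable h).continuous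
  simp_rw [e]
  fun_prop

/-- Asymptotic hypotheses on the Lévy measure. -/
structure Good (ν : Measure ℝ) : Prop where
  h : ExpInt ν
  hd : DecayC ν
  ha : Tendsto (fun ζ => levyM ν 4 ζ / (levyM ν 2 ζ) ^ 2) atTop (nhds 0)
  hb : Tendsto (levyM ν 2) atTop atTop
  hF : ∃ c > 0, ∃ δ > 0, ∀ ζ : ℝ, 0 ≤ ζ → ∀ z : ℝ, c * Real.exp (δ * ζ) * min 1 (z ^ 2) ≤ FF ν ζ z
  he1 : ∀ ε > 0, ∀ᶠ ζ in atTop, levyM ν 4 ζ ≤ Real.exp (ε * ζ) * levyM ν 2 ζ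
  he2 : ∀ ε > 0, ∀ᶠ ζ in atTop, levyM ν 2 ζ ≤ Real.exp (Real.exp (ε * ζ))

lemma Good.far {ν : Measure ℝ} (g : Good ν) : ∀ᶠ ζ in atTop, ∀ z : ℝ,
    levyM ν 2 ζ / 2 < z ^ 2 * levyM ν 4 ζ → Real.exp (-FF ν ζ z / 2) ≤ (levyM ν 2 ζ)⁻¹ := by
  obtain ⟨c, hc, δ, hδ, hF⟩ := g.hF
  have t : Tendsto (fun ζ : ℝ => Real.exp (δ / 2 * ζ)) atTop atTop :=
    Real.tendsto_exp_atTop.comp (tendsto_id.const_mul_atTop (by positivity))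
  filter_upwards [g.he1 (δ / 4) (by positivity), g.he2 (δ / 4) (by positivity),
    t.eventually_ge_atTop (4 / c), eventually_ge_atTop 0, g.hb.eventually_gt_atTop 0]
    with ζ h1 h2 h3 h4 h5 z hz
  have hz2 : Real.exp (-(δ / 4 * ζ)) / 2 ≤ z ^ 2 := by
    have : levyM ν 2 ζ / 2 < z ^ 2 * (Real.exp (δ / 4 * ζ) * levyM ν 2 ζ) :=
      hz.trans_le (mul_le_mul_of_nonneg_left h1 (sq_nonneg _))
    have : 1 / 2 < z ^ 2 * Real.exp (δ / 4 * ζ) := by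
      by_contra hh
      push Not at hh
      nlinarith
    rw [Real.exp_neg, div_le_iff₀ (by norm_num), inv_le_iff_one_le_mul₀ (Real.exp_pos _)]
    linarith
  have hmin : Real.exp (-(δ / 4 * ζ)) / 2 ≤ min 1 (z ^ 2) := by
    refine le_min ?_ hz2
    have : Real.exp (-(δ / 4 * ζ)) ≤ 1 := Real.exp_le_one_iff.2 (by nlinarith)
    linarith
  have hFF : c / 2 * Real.exp (3 * δ / 4 * ζ) ≤ FF ν ζ z := by
    refine le_trans ?_ (hF ζ h4 z)
    calc c / 2 * Real.exp (3 * δ / 4 * ζ) = c * Real.exp (δ * ζ) * (Real.exp (-(δ / 4 * ζ)) / 2) := by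
          rw [show 3 * δ / 4 * ζ = δ * ζ + -(δ / 4 * ζ) by ring, Real.exp_add]; ring
      _ ≤ _ := by gcongr
  have h6 : Real.exp (δ / 4 * ζ) ≤ FF ν ζ z / 2 := by
    have e : Real.exp (3 * δ / 4 * ζ) = Real.exp (δ / 2 * ζ) * Real.exp (δ / 4 * ζ) := by
      rw [← Real.exp_add]; congr 1; ring
    have : 1 ≤ c / 4 * Real.exp (δ / 2 * ζ) := by
      rw [div_le_iff₀ hc] at h3; linarith
    have h7 := mul_le_mul_of_nonneg_right this (Real.exp_pos (δ / 4 * ζ)).le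
    rw [e] at hFF
    nlinarith
  rw [neg_div, Real.exp_neg]
  refine inv_anti₀ h5 (h2.trans (Real.exp_le_exp.2 h6))

lemma Good.dom {ν : Measure ℝ} (g : Good ν) : ∃ C : ℝ, ∀ᶠ ζ in atTop, ∀ t : ℝ,
    ‖Complex.exp (GG ν ζ (t / √(levyM ν 2 ζ)))‖ ≤ Real.exp (-(1/4) * t ^ 2) + C * (1 + t ^ 2)⁻¹ := by
  obtain ⟨C, hC, hd⟩ := g.hd
  refine ⟨C, ?_⟩
  filter_upwards [g.far, eventually_ge_atTop 0, g.hb.eventually_ge_atTop 1] with ζ h1 h2 h3 t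
  rw [Complex.norm_exp, GG_re g.h]
  have hs : (t / √(levyM ν 2 ζ)) ^ 2 = t ^ 2 / levyM ν 2 ζ := by
    rw [div_pow, Real.sq_sqrt (by linarith)]
  set z := t / √(levyM ν 2 ζ) with hz
  have hs' : z ^ 2 * levyM ν 2 ζ = t ^ 2 := by rw [hs]; field_simp
  by_cases hc : levyM ν 2 ζ / 2 < z ^ 2 * levyM ν 4 ζ
  · have a := h1 z hc
    have b := hd ζ h2 z
    have e : Real.exp (-FF ν ζ z) = Real.exp (-FF ν ζ z / 2) * Real.exp (-FF ν ζ z / 2) := by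
      rw [← Real.exp_add]; congr 1; ring
    have : Real.exp (-FF ν ζ z) ≤ C * (1 + t ^ 2)⁻¹ := by
      rw [e]
      calc _ ≤ (levyM ν 2 ζ)⁻¹ * (C * (1 + z ^ 2)⁻¹) := by gcongr
        _ = C * (levyM ν 2 ζ + t ^ 2)⁻¹ := by
            rw [← hs', mul_left_comm, ← mul_inv]; congr 2; ring
        _ ≤ _ := by gcongr
    have := Real.exp_pos (-(1/4) * t ^ 2)
    linarith
  · push Not at hc
    have := FF_lower g.h ζ z
    have h4 : z ^ 4 * levyM ν 4 ζ ≤ z ^ 2 * (levyM ν 2 ζ / 2) := by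
      rw [show z ^ 4 * levyM ν 4 ζ = z ^ 2 * (z ^ 2 * levyM ν 4 ζ) by ring]
      gcongr
    have h5 : Real.exp (-FF ν ζ z) ≤ Real.exp (-(1/4) * t ^ 2) := by
      refine Real.exp_le_exp.2 ?_
      rw [← hs']; linarith
    have : 0 ≤ C * (1 + t ^ 2)⁻¹ := by positivity
    linarith

lemma Good.ptwise {ν : Measure ℝ} (g : Good ν) (t : ℝ) :
    Tendsto (fun ζ => Complex.exp (GG ν ζ (t / √(levyM ν 2 ζ)))) atTop
      (nhds ((Real.exp (-(1/2) * t ^ 2) : ℝ) : ℂ)) := by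
  rw [Complex.ofReal_exp]
  refine (Complex.continuous_exp.tendsto _).comp ?_
  rw [tendsto_iff_norm_sub_tendsto_zero, Metric.tendsto_nhds]
  intro ε hε
  set e := ε / (4 * (t ^ 2 + 1)) with he
  have hep : 0 < e := by positivity
  have T : Tendsto (fun ζ => 2 * e * t ^ 2 + 2 / e * (t ^ 4 * (levyM ν 4 ζ / (levyM ν 2 ζ) ^ 2)))
      atTop (nhds (2 * e * t ^ 2 + 2 / e * (t ^ 4 * 0))) :=
    ((g.ha.const_mul _).const_mul _).const_add _
  have lt : 2 * e * t ^ 2 + 2 / e * (t ^ 4 * 0) < ε := by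
    have : 4 * e * (t ^ 2 + 1) = ε := by rw [he]; field_simp
    nlinarith [sq_nonneg t]
  filter_upwards [T.eventually_lt_const lt, g.hb.eventually_ge_atTop 1] with ζ h1 h3
  rw [Real.dist_eq, sub_zero, abs_of_nonneg (norm_nonneg _)]
  refine lt_of_le_of_lt ?_ h1
  have hs : (t / √(levyM ν 2 ζ)) ^ 2 = t ^ 2 / levyM ν 2 ζ := by
    rw [div_pow, Real.sq_sqrt (by linarith)]
  have := GG_approx g.h ζ (t / √(levyM ν 2 ζ)) e hep
  have h4 : (t / √(levyM ν 2 ζ)) ^ 4 = t ^ 4 / (levyM ν 2 ζ) ^ 2 := by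
    rw [show 4 = 2 * 2 from rfl, pow_mul, hs, pow_mul, div_pow]
  have hm : levyM ν 2 ζ ≠ 0 := by linarith
  rw [h4, hs, div_mul_cancel₀ _ hm] at this
  rw [show t ^ 4 * (levyM ν 4 ζ / (levyM ν 2 ζ) ^ 2) = t ^ 4 / (levyM ν 2 ζ) ^ 2 * levyM ν 4 ζ by ring]
  have ee : GG ν ζ (t / √(levyM ν 2 ζ)) - ((-(1/2) * t ^ 2 : ℝ) : ℂ) =
      GG ν ζ (t / √(levyM ν 2 ζ)) + ((t ^ 2 / 2 : ℝ) : ℂ) := by push_cast; ring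
  rw [ee]
  exact this

lemma Good.L1 {ν : Measure ℝ} (g : Good ν) :
    Tendsto (fun ζ => ∫ t : ℝ, ‖Complex.exp (GG ν ζ (t / √(levyM ν 2 ζ)))
      - ((Real.exp (-(1/2) * t ^ 2) : ℝ) : ℂ)‖) atTop (nhds 0) := by
  obtain ⟨C, hC⟩ := g.dom
  have := tendsto_integral_filter_of_dominated_convergence (μ := (volume : Measure ℝ)) (l := atTop)
    (F := fun ζ t => ‖Complex.exp (GG ν ζ (t / √(levyM ν 2 ζ)))
      - ((Real.exp (-(1/2) * t ^ 2) : ℝ) : ℂ)‖) (f := fun _ => (0 : ℝ))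
    (fun t => (Real.exp (-(1/4) * t ^ 2) + C * (1 + t ^ 2)⁻¹) + Real.exp (-(1/2) * t ^ 2))
    (Eventually.of_forall fun ζ => ?_) ?_ ?_ ?_
  · simpa using this
  · have := GG_continuous g.h ζ
    exact Continuous.aestronglyMeasurable (by fun_prop)
  · filter_upwards [hC] with ζ hζ
    refine Eventually.of_forall fun t => ?_
    rw [norm_norm]
    refine (norm_sub_le _ _).trans (add_le_add (hζ t) ?_)
    rw [Complex.norm_real, Real.norm_eq_abs, abs_of_pos (Real.exp_pos _)]
  · exact ((integrable_exp_neg_mul_sq (by norm_num)).add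
      (integrable_inv_one_add_sq.const_mul C)).add (integrable_exp_neg_mul_sq (by norm_num))
  · refine Eventually.of_forall fun t => ?_
    exact tendsto_iff_norm_sub_tendsto_zero.1 (g.ptwise t)

lemma Good.integrable {ν : Measure ℝ} (g : Good ν) (ζ : ℝ) (hζ : 0 ≤ ζ) :
    Integrable (fun z : ℝ => Complex.exp (GG ν ζ z)) := by
  obtain ⟨C, hC, hd⟩ := g.hd
  have := GG_continuous g.h ζ
  refine (integrable_inv_one_add_sq.const_mul C).mono'
    (Continuous.aestronglyMeasurable (by fun_prop)) (Eventually.of_forall fun z => ?_)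
  rw [Complex.norm_exp, GG_re g.h]
  refine le_trans (Real.exp_le_exp.2 ?_) (hd ζ hζ z)
  have := FF_nonneg (ν := ν) ζ z
  linarith

lemma norm_exp_I_sub_one_le (θ : ℝ) : ‖Complex.exp (Complex.I * θ) - 1‖ ≤ |θ| := by
  have := Real.norm_exp_I_mul_ofReal_sub_one_le (x := θ)
  simpa using this

/-- the scaled integral -/
noncomputable def JJ (ν : Measure ℝ) (ζ a : ℝ) : ℂ :=
  ∫ z : ℝ, Complex.exp (Complex.I * (a * z : ℝ)) * Complex.exp (GG ν ζ z)

lemma Good.asym {ν : Measure ℝ} (g : Good ν) (A : ℝ) (ε : ℝ) (hε : 0 < ε) :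
    ∀ᶠ ζ in atTop, ∀ a : ℝ, |a| ≤ A →
      ‖(√(levyM ν 2 ζ) : ℂ) * JJ ν ζ a - (√(2 * Real.pi) : ℂ)‖ < ε := by
  set B := ∫ t : ℝ, |t| * Real.exp (-(1/2) * t ^ 2) with hB
  have iB : Integrable (fun t : ℝ => |t| * Real.exp (-(1/2) * t ^ 2)) := by
    have := (integrable_mul_exp_neg_mul_sq (b := 1/2) (by norm_num)).norm
    refine this.congr (Eventually.of_forall fun t => ?_)
    simp
  have T2 : Tendsto (fun ζ => A / √(levyM ν 2 ζ) * B) atTop (nhds 0) := by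
    have : Tendsto (fun ζ => √(levyM ν 2 ζ)) atTop atTop := Real.tendsto_sqrt_atTop.comp g.hb
    simpa using (this.const_div_atTop A).mul_const B
  have T := g.L1.add T2
  rw [add_zero] at T
  filter_upwards [T.eventually_lt_const hε, g.hb.eventually_ge_atTop 1, eventually_ge_atTop 0]
    with ζ h1 h2 h3 a ha
  refine lt_of_le_of_lt ?_ h1
  set σ := √(levyM ν 2 ζ) with hσ
  have σpos : 0 < σ := Real.sqrt_pos.2 (by linarith)
  have e1 : (σ : ℂ) * JJ ν ζ a = ∫ t : ℝ, Complex.exp (Complex.I * (a * (t / σ) : ℝ))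
      * Complex.exp (GG ν ζ (t / σ)) := by
    have := Measure.integral_comp_div
      (fun z : ℝ => Complex.exp (Complex.I * (a * z : ℝ)) * Complex.exp (GG ν ζ z)) σ
    rw [this, abs_of_pos σpos, JJ, Complex.real_smul]
  have e2 : (√(2 * Real.pi) : ℂ) = ∫ t : ℝ, ((Real.exp (-(1/2) * t ^ 2) : ℝ) : ℂ) := by
    rw [integral_complex_ofReal, integral_gaussian, show 2 * Real.pi = Real.pi / (1 / 2) by ring]
  have i1 : Integrable (fun t : ℝ => Complex.exp (GG ν ζ (t / σ))) :=
    (g.integrable ζ h3).comp_div σpos.ne'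
  have i2 : Integrable (fun t : ℝ => ((Real.exp (-(1/2) * t ^ 2) : ℝ) : ℂ)) :=
    (integrable_exp_neg_mul_sq (by norm_num)).ofReal
  have n1 : ∀ θ : ℝ, ‖Complex.exp (Complex.I * θ)‖ = 1 := fun θ => by
    rw [mul_comm]; exact Complex.norm_exp_ofReal_mul_I θ
  have i3 : Integrable (fun t : ℝ => Complex.exp (Complex.I * (a * (t / σ) : ℝ))
      * Complex.exp (GG ν ζ (t / σ))) := by
    refine i1.bdd_mul (c := 1) (Continuous.aestronglyMeasurable (by fun_prop)) ?_
    exact Eventually.of_forall fun t => (n1 _).le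
  have i4 : Integrable (fun t : ℝ => ‖Complex.exp (GG ν ζ (t / σ))
      - ((Real.exp (-(1/2) * t ^ 2) : ℝ) : ℂ)‖) := (i1.sub i2).norm
  rw [e1, e2, ← integral_sub i3 i2, hB, ← integral_const_mul,
    ← integral_add i4 (iB.const_mul _)]
  refine norm_integral_le_of_norm_le (i4.add (iB.const_mul _))
    (Eventually.of_forall fun t => ?_)
  set E := Complex.exp (Complex.I * (a * (t / σ) : ℝ)) with hE
  set G := Complex.exp (GG ν ζ (t / σ))
  set w := ((Real.exp (-(1/2) * t ^ 2) : ℝ) : ℂ) with hw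
  have : E * G - w = E * (G - w) + (E - 1) * w := by ring
  rw [this]
  refine (norm_add_le _ _).trans ?_
  rw [norm_mul, norm_mul, hE, n1, one_mul, hw, Complex.norm_real, Real.norm_eq_abs (Real.exp _),
    abs_of_pos (Real.exp_pos _)]
  refine add_le_add le_rfl ?_
  rw [← mul_assoc]
  refine mul_le_mul_of_nonneg_right ?_ (Real.exp_pos _).le
  refine (norm_exp_I_sub_one_le _).trans ?_
  rw [abs_mul, abs_div, abs_of_pos σpos]
  calc |a| * (|t| / σ) ≤ A * (|t| / σ) := by gcongr
    _ = _ := by ring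

lemma ratio_close {s ε : ℝ} (hs : 1 ≤ s) (hε : 0 < ε) {N D : ℝ}
    (hN : |N - s| < min (1/2) (ε / 4)) (hD : |D - s| < min (1/2) (ε / 4)) : |N / D - 1| < ε := by
  have h1 := abs_lt.1 (hN.trans_le (min_le_right _ _))
  have h2 := abs_lt.1 (hD.trans_le (min_le_right _ _))
  have h3 := abs_lt.1 (hD.trans_le (min_le_left _ _))
  have hD : 1 / 2 < D := by linarith
  rw [div_sub_one (by linarith), abs_div, abs_of_pos (by linarith : 0 < D), div_lt_iff₀ (by linarith),
    abs_lt]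
  constructor <;> nlinarith

lemma Good.conclusion {ν : Measure ℝ} (g : Good ν) (ζ : ℝ → ℝ) (hζ : ∀ x : ℝ, 0 ≤ x → 0 ≤ ζ x ∧ levyM ν 1 (ζ x) = x)
    (hζt : Tendsto ζ atTop atTop) (p : ℝ → ℝ)
    (hp : ∀ x : ℝ, p x = (1 / (2 * Real.pi)) *
      (∫ z : ℝ, Complex.exp (Complex.I * (x : ℂ) * (z : ℂ) + PS ν (z : ℂ))).re) :
    ∀ A : Set ℝ, Bornology.IsBounded A →
      ∀ ε > (0 : ℝ), ∃ X : ℝ, ∀ x : ℝ, X ≤ x → ∀ a ∈ A,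
        |p (x + a) / p x * Real.exp (a * ζ x) - 1| < ε := by
  intro A hA ε hε
  obtain ⟨B, hB⟩ := hA.exists_norm_le
  have hm : (0:ℝ) < min (1/2) (ε / 4) := by positivity
  have ev := hζt.eventually (g.asym (max B 0) _ hm)
  have ev2 := hζt.eventually (g.hb.eventually_ge_atTop 1)
  obtain ⟨X, hX⟩ := eventually_atTop.1 ((ev.and ev2).and (eventually_ge_atTop (0:ℝ)))
  refine ⟨X, fun x hx a ha => ?_⟩
  obtain ⟨⟨h1, h2⟩, h3⟩ := hX x hx
  obtain ⟨z0, z1⟩ := hζ x h3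
  set σ := √(levyM ν 2 (ζ x)) with hσ
  have σpos : 0 < σ := Real.sqrt_pos.2 (by linarith)
  have rep : ∀ b : ℝ, p (x + b) = (1 / (2 * Real.pi)) *
      (Real.exp (-(x + b) * ζ x + levyM ν 0 (ζ x)) * (JJ ν (ζ x) b).re) := by
    intro b
    rw [hp, main_identity g.h g.hd (x + b) (ζ x) z0, z1, add_sub_cancel_left, JJ,
      Complex.re_ofReal_mul]
  have close : ∀ b : ℝ, |b| ≤ max B 0 → |σ * (JJ ν (ζ x) b).re - √(2 * Real.pi)| < min (1/2) (ε / 4) := by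
    intro b hb
    refine lt_of_le_of_lt ?_ (h1 b hb)
    have := Complex.abs_re_le_norm ((σ : ℂ) * JJ ν (ζ x) b - (√(2 * Real.pi) : ℂ))
    rwa [Complex.sub_re, Complex.re_ofReal_mul, Complex.ofReal_re] at this
  have hs : 1 ≤ √(2 * Real.pi) := by
    rw [Real.one_le_sqrt]; linarith [Real.pi_gt_three]
  have ca := close a ((hB a ha).trans (le_max_left _ _))
  have c0 := close 0 (by simp)
  have fin := ratio_close hs hε ca c0
  have D0 : (JJ ν (ζ x) 0).re ≠ 0 := by
    intro h0
    rw [h0] at c0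
    have := c0.trans_le (min_le_left _ _)
    rw [mul_zero, zero_sub, abs_neg, abs_of_nonneg (Real.sqrt_nonneg _)] at this
    linarith
  have p0 := rep 0
  rw [add_zero] at p0
  rw [rep a, p0]
  convert fin using 3
  rw [show -(x + a) * ζ x + levyM ν 0 (ζ x) = (-x * ζ x + levyM ν 0 (ζ x)) + (-(a * ζ x)) by ring,
    Real.exp_add, Real.exp_neg]
  have := Real.pi_pos
  have := Real.exp_pos (a * ζ x)
  have := Real.exp_pos (-x * ζ x + levyM ν 0 (ζ x))
  field_simp

set_option linter.unusedSectionVars false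
lemma expInt_mu {μ : Measure ℝ} (hμint : Integrable (fun u : ℝ => min 1 (u ^ 2)) μ)
    (hμexp : ∀ C : ℝ, Integrable (fun u : ℝ => Real.exp (C * u)) (μ.restrict {u : ℝ | 1 ≤ |u|})) :
    ExpInt μ := by
  intro R
  have hS : MeasurableSet {u : ℝ | 1 ≤ |u|} := measurableSet_le measurable_const (by fun_prop)
  have hm : Continuous (fun v : ℝ => v ^ 2 * Real.exp (R * |v|)) := by fun_prop
  rw [← integrableOn_univ, ← compl_union_self {u : ℝ | 1 ≤ |u|}]
  refine IntegrableOn.union ?_ ?_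
  · refine Integrable.mono' (hμint.const_mul (Real.exp |R|)).integrableOn
      hm.aestronglyMeasurable ?_
    refine (ae_restrict_iff' hS.compl).2 (Eventually.of_forall fun u hu => ?_)
    have hu' : |u| < 1 := by simpa using hu
    rw [Real.norm_eq_abs, abs_of_nonneg (by positivity)]
    have h1 : u ^ 2 ≤ 1 := by rw [← sq_abs]; nlinarith [abs_nonneg u]
    rw [min_eq_right h1, mul_comm]
    gcongr
    nlinarith [le_abs_self R, abs_nonneg u, abs_nonneg R]
  · refine Integrable.mono' (((hμexp (R + 1)).add (hμexp (-(R + 1)))).const_mul 2)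
      hm.aestronglyMeasurable (Eventually.of_forall fun u => ?_)
    rw [Real.norm_eq_abs, abs_of_nonneg (by positivity)]
    have h : u ^ 2 ≤ 2 * Real.exp |u| := by
      have := Real.quadratic_le_exp_of_nonneg (abs_nonneg u)
      have h2 := abs_nonneg u
      rw [sq_abs] at this
      linarith
    calc u ^ 2 * Real.exp (R * |u|) ≤ 2 * Real.exp |u| * Real.exp (R * |u|) := by gcongr
      _ = 2 * Real.exp ((R + 1) * |u|) := by rw [add_mul, Real.exp_add, one_mul]; ring
      _ ≤ _ := by
        simp only [Pi.add_apply]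
        gcongr
        rcases abs_choice u with h | h <;> rw [h]
        · have := Real.exp_pos (-(R + 1) * u); linarith
        · rw [show (R + 1) * -u = -(R + 1) * u by ring]
          have := Real.exp_pos ((R + 1) * u); linarith

lemma sigmaFinite_mu {μ : Measure ℝ} (hμ0 : μ {0} = 0)
    (hμint : Integrable (fun u : ℝ => min 1 (u ^ 2)) μ) : SigmaFinite μ := by
  refine ⟨⟨⟨fun n => {0} ∪ {u : ℝ | 1 / ((n : ℝ) + 1) ≤ ‖min 1 (u ^ 2)‖}, fun _ => trivial,
    fun n => ?_, ?_⟩⟩⟩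
  · refine (measure_union_le _ _).trans_lt ?_
    rw [hμ0, zero_add]
    exact hμint.measure_norm_ge_lt_top (by positivity)
  · refine eq_univ_of_forall fun u => ?_
    by_cases hu : u = 0
    · exact mem_iUnion.2 ⟨0, Or.inl hu⟩
    · have : 0 < ‖min 1 (u ^ 2)‖ := by
        rw [norm_pos_iff]
        have : 0 < min 1 (u ^ 2) := by positivity
        exact this.ne'
      obtain ⟨n, hn⟩ := exists_nat_one_div_lt this
      exact mem_iUnion.2 ⟨n, Or.inr hn.le⟩

/-- product measure -/
noncomputable def prodM (μ : Measure ℝ) : Measure (ℝ × ℝ) := (volume.restrict (Iic (0:ℝ))).prod μ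

/-- Lévy measure of the invariant law -/
noncomputable def nuM (μ : Measure ℝ) (lam : ℝ) : Measure ℝ :=
  (prodM μ).map (fun p : ℝ × ℝ => Real.exp (lam * p.1) * p.2)

lemma integrable_exp_Iic {c : ℝ} (hc : 0 < c) :
    Integrable (fun s : ℝ => Real.exp (c * s)) (volume.restrict (Iic (0:ℝ))) :=
  integrableOn_exp_mul_Iic hc 0

section
variable {μ : Measure ℝ} [SigmaFinite μ] {lam : ℝ}

lemma prod_int {E : Type*} [NormedAddCommGroup E] (hlam : 0 < lam) (h : ExpInt μ)
    {f : ℝ → E} (hf : Continuous f) (C R : ℝ) (hC : 0 ≤ C) (hR : 0 ≤ R)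
    (hb : ∀ v, ‖f v‖ ≤ C * (v ^ 2 * Real.exp (R * |v|))) :
    Integrable (fun p : ℝ × ℝ => f (Real.exp (lam * p.1) * p.2)) (prodM μ) := by
  have i1 : Integrable (fun p : ℝ × ℝ => (Real.exp (2 * lam * p.1)) *
      (C * (p.2 ^ 2 * Real.exp (R * |p.2|)))) (prodM μ) :=
    (integrable_exp_Iic (c := 2 * lam) (by positivity)).mul_prod ((h R).const_mul C)
  have hae : ∀ᵐ p ∂(prodM μ), p.1 ≤ 0 := by
    have : ∀ᵐ s ∂(volume.restrict (Iic (0:ℝ))), s ≤ 0 := ae_restrict_mem measurableSet_Iic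
    exact Measure.quasiMeasurePreserving_fst.ae this
  have hc : Continuous (fun p : ℝ × ℝ => Real.exp (lam * p.1) * p.2) := by fun_prop
  refine i1.mono' (hf.comp hc).stronglyMeasurable.aestronglyMeasurable ?_
  filter_upwards [hae] with p hp
  have he : Real.exp (lam * p.1) ≤ 1 := Real.exp_le_one_iff.2 (by nlinarith)
  refine (hb _).trans ?_
  rw [abs_mul, abs_of_pos (Real.exp_pos _)]
  calc C * ((Real.exp (lam * p.1) * p.2) ^ 2 * Real.exp (R * (Real.exp (lam * p.1) * |p.2|)))
      ≤ C * ((Real.exp (lam * p.1) * p.2) ^ 2 * Real.exp (R * (1 * |p.2|))) := by gcongr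
    _ = _ := by
      rw [mul_pow, ← Real.exp_nat_mul, one_mul]; push_cast
      rw [show 2 * (lam * p.1) = 2 * lam * p.1 by ring]; ring

lemma nu_integral {E : Type*} [NormedAddCommGroup E] [NormedSpace ℝ E] {f : ℝ → E}
    (hf : Continuous f) [SecondCountableTopology E] :
    ∫ v, f v ∂(nuM μ lam) = ∫ p, f (Real.exp (lam * p.1) * p.2) ∂(prodM μ) := by
  unfold nuM
  have hc : Continuous (fun p : ℝ × ℝ => Real.exp (lam * p.1) * p.2) := by fun_prop
  exact integral_map hc.measurable.aemeasurable hf.aestronglyMeasurable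

lemma nu_integral' {E : Type*} [NormedAddCommGroup E] [NormedSpace ℝ E] [SecondCountableTopology E]
    (hlam : 0 < lam) (h : ExpInt μ)
    {f : ℝ → E} (hf : Continuous f) (C R : ℝ) (hC : 0 ≤ C) (hR : 0 ≤ R)
    (hb : ∀ v, ‖f v‖ ≤ C * (v ^ 2 * Real.exp (R * |v|))) :
    ∫ v, f v ∂(nuM μ lam) = ∫ s in Iic (0:ℝ), ∫ u, f (Real.exp (lam * s) * u) ∂μ := by
  rw [nu_integral hf]
  exact integral_prod _ (prod_int hlam h hf C R hC hR hb)

lemma nu_expInt (hlam : 0 < lam) (h : ExpInt μ) : ExpInt (nuM μ lam) := by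
  intro R
  have hc : Continuous (fun p : ℝ × ℝ => Real.exp (lam * p.1) * p.2) := by fun_prop
  have hf : Continuous (fun v : ℝ => v ^ 2 * Real.exp (R * |v|)) := by fun_prop
  refine (integrable_map_measure hf.aestronglyMeasurable hc.measurable.aemeasurable).2 ?_
  refine prod_int hlam h hf 1 |R| zero_le_one (abs_nonneg _) fun v => ?_
  rw [Real.norm_eq_abs, abs_of_nonneg (by positivity), one_mul]
  gcongr
  exact le_abs_self R

lemma nu_PS (hlam : 0 < lam) (h : ExpInt μ) (w : ℂ) : PS (nuM μ lam) w = ouPsi μ lam w := by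
  unfold PS ouPsi
  exact nu_integral' hlam h (by fun_prop) (‖w‖ ^ 2) ‖w‖ (by positivity) (by positivity) (psi_bound w)

lemma nu_m1 (hlam : 0 < lam) (h : ExpInt μ) (ζ : ℝ) : levyM (nuM μ lam) 1 ζ = ouM μ lam 1 ζ := by
  unfold ouM
  simp only [levyM]
  rw [nu_integral' hlam h (by fun_prop) |ζ| |ζ| (abs_nonneg _) (abs_nonneg _) (fun v => by
    rw [Real.norm_eq_abs, abs_mul]
    have := abs_exp_sub_one_le' (ζ * v)
    rw [abs_mul] at this
    calc |v| * |Real.exp (ζ * v) - 1| ≤ |v| * (|ζ| * |v| * Real.exp (|ζ| * |v|)) := by gcongr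
      _ = _ := by rw [← sq_abs v]; ring)]
  congr 1; ext s
  rw [← integral_const_mul]
  congr 1; ext u
  rw [pow_one, mul_assoc, show ζ * (Real.exp (lam * s) * u) = Real.exp (lam * s) * ζ * u by ring]

lemma two_bound (ζ v : ℝ) : ‖v ^ 2 * Real.exp (ζ * v)‖ ≤ 1 * (v ^ 2 * Real.exp (|ζ| * |v|)) := by
  rw [Real.norm_eq_abs, abs_of_nonneg (by positivity), one_mul]
  exact mul_le_mul_of_nonneg_left (exp_mul_le_abs _ _) (sq_nonneg _)

lemma four_bound' (ζ v : ℝ) : ‖v ^ 4 * Real.exp (ζ * v)‖ ≤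
    2 * (v ^ 2 * Real.exp ((|ζ| + 1) * |v|)) := by
  rw [Real.norm_eq_abs, abs_of_nonneg (by positivity)]
  exact four_bound ζ v

lemma inner_two (ζ s : ℝ) : Real.exp (lam * s) ^ 2 * levyM μ 2 (Real.exp (lam * s) * ζ) =
    ∫ u, (Real.exp (lam * s) * u) ^ 2 * Real.exp (ζ * (Real.exp (lam * s) * u)) ∂μ := by
  rw [m2_eq, ← integral_const_mul]
  congr 1; ext u
  rw [show ζ * (Real.exp (lam * s) * u) = Real.exp (lam * s) * ζ * u by ring]; ring

lemma inner_four (ζ s : ℝ) : Real.exp (lam * s) ^ 4 * levyM μ 4 (Real.exp (lam * s) * ζ) =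
    ∫ u, (Real.exp (lam * s) * u) ^ 4 * Real.exp (ζ * (Real.exp (lam * s) * u)) ∂μ := by
  rw [m4_eq, ← integral_const_mul]
  congr 1; ext u
  rw [show ζ * (Real.exp (lam * s) * u) = Real.exp (lam * s) * ζ * u by ring]; ring

lemma nu_m2 (hlam : 0 < lam) (h : ExpInt μ) (ζ : ℝ) : levyM (nuM μ lam) 2 ζ =
    ∫ s in Iic (0:ℝ), Real.exp (lam * s) ^ 2 * levyM μ 2 (Real.exp (lam * s) * ζ) := by
  simp_rw [inner_two]
  rw [m2_eq, nu_integral' hlam h (by fun_prop) 1 |ζ| zero_le_one (abs_nonneg _) (two_bound ζ)]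

lemma nu_i2 (hlam : 0 < lam) (h : ExpInt μ) (ζ : ℝ) : IntegrableOn (fun s : ℝ =>
    Real.exp (lam * s) ^ 2 * levyM μ 2 (Real.exp (lam * s) * ζ)) (Iic 0) := by
  simp_rw [inner_two]
  exact (prod_int hlam h (by fun_prop : Continuous fun v => v ^ 2 * Real.exp (ζ * v))
    1 |ζ| zero_le_one (abs_nonneg _) (two_bound ζ)).integral_prod_left

lemma nu_m4 (hlam : 0 < lam) (h : ExpInt μ) (ζ : ℝ) : levyM (nuM μ lam) 4 ζ =
    ∫ s in Iic (0:ℝ), Real.exp (lam * s) ^ 4 * levyM μ 4 (Real.exp (lam * s) * ζ) := by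
  simp_rw [inner_four]
  rw [m4_eq, nu_integral' hlam h (by fun_prop) 2 (|ζ| + 1) zero_le_two (by positivity)
    (four_bound' ζ)]

lemma nu_FF (hlam : 0 < lam) (h : ExpInt μ) (ζ z : ℝ) : FF (nuM μ lam) ζ z =
    ∫ u, (∫ s in Iic (0:ℝ), (1 - Real.cos (z * (Real.exp (lam * s) * u))) *
      Real.exp (ζ * (Real.exp (lam * s) * u))) ∂μ := by
  unfold FF
  rw [nu_integral (by fun_prop)]
  exact integral_prod_symm _ (prod_int hlam h
    (by fun_prop : Continuous fun v => (1 - Real.cos (z * v)) * Real.exp (ζ * v))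
    (z ^ 2 / 2) |ζ| (by positivity) (abs_nonneg _) (fun v => by
      rw [Real.norm_eq_abs, abs_of_nonneg (FF_nonneg' _ _ _)]
      exact FF_bound ζ z v))

end

lemma lower_int {α : Type*} [MeasurableSpace α] {μ : Measure α} {f : α → ℝ} (hf : Integrable f μ)
    (hnn : 0 ≤ᵐ[μ] f) {S : Set α}
    (hS : MeasurableSet S) (hfin : μ S ≠ ⊤) (c : ℝ) (hc : ∀ᵐ u ∂μ, u ∈ S → c ≤ f u) :
    c * μ.real S ≤ ∫ u, f u ∂μ := by
  calc c * μ.real S = ∫ u in S, c ∂μ := by rw [setIntegral_const, smul_eq_mul, mul_comm]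
    _ ≤ ∫ u in S, f u ∂μ := by
      refine integral_mono_ae ((integrableOn_const (by exact hfin))) hf.integrableOn ?_
      exact (ae_restrict_iff' hS).2 hc
    _ ≤ ∫ u, f u ∂μ := setIntegral_le_integral hf hnn

lemma meas_fin {μ : Measure ℝ} (h : ExpInt μ) {η : ℝ} (hη : 0 < η) : μ (Ioi η) ≠ ⊤ := by
  have := (h 0).measure_norm_ge_lt_top (ε := η ^ 2) (by positivity)
  refine (lt_of_le_of_lt (measure_mono ?_) this).ne
  intro u hu
  have hu' : η < u := hu
  simp only [zero_mul, Real.exp_zero, mul_one, mem_setOf_eq, norm_pow, Real.norm_eq_abs]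
  rw [abs_of_pos (hη.trans hu')]
  gcongr

lemma meas_large {μ : Measure ℝ} (h : ExpInt μ) (hμinf : μ (Set.Ioi (0 : ℝ)) = ⊤) (N : ℝ) :
    ∃ η > 0, N ≤ μ.real (Ioi η) := by
  have hmono : Monotone (fun n : ℕ => Ioi (1 / ((n : ℝ) + 1))) := by
    intro a b hab
    exact Ioi_subset_Ioi (one_div_le_one_div_of_le (by positivity) (by gcongr))
  have hU : (⋃ n : ℕ, Ioi (1 / ((n : ℝ) + 1))) = Ioi 0 := by
    ext u
    simp only [mem_iUnion, mem_Ioi]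
    constructor
    · rintro ⟨n, hn⟩; exact lt_trans (by positivity) hn
    · intro hu; exact exists_nat_one_div_lt hu
  have t := tendsto_measure_iUnion_atTop (μ := μ) hmono
  rw [hU, hμinf] at t
  obtain ⟨n, hn⟩ := (t.eventually (eventually_gt_nhds (ENNReal.ofReal_lt_top (r := N)))).exists
  refine ⟨1 / ((n : ℝ) + 1), by positivity, ?_⟩
  exact (ENNReal.ofReal_le_iff_le_toReal (meas_fin h (by positivity))).1 hn.le

lemma M2_lower {μ : Measure ℝ} (h : ExpInt μ) {η ξ : ℝ} (hη : 0 < η) (hξ : 0 ≤ ξ) :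
    η ^ 2 * Real.exp (ξ * η) * μ.real (Ioi η) ≤ levyM μ 2 ξ := by
  rw [m2_eq]
  refine lower_int (h.i_two ξ) (Eventually.of_forall fun v => by simp only [Pi.zero_apply]; positivity)
    measurableSet_Ioi (meas_fin h hη) _ (Eventually.of_forall fun u hu => ?_)
  have hu' : η < u := hu
  gcongr

/-- Facts about the moments of `μ`. -/
structure MFacts (μ : Measure ℝ) (c₀ C : ℝ) : Prop where
  c0 : 0 < c₀
  C0 : 1 ≤ C
  low : ∀ ξ, 0 ≤ ξ → c₀ ≤ levyM μ 2 ξ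
  mono : ∀ a b, 0 ≤ a → a ≤ b → levyM μ 2 a ≤ C * levyM μ 2 b
  tend : Tendsto (levyM μ 2) atTop atTop

lemma mfacts {μ : Measure ℝ} (h : ExpInt μ) (hμinf : μ (Set.Ioi (0 : ℝ)) = ⊤) :
    ∃ c₀ C, MFacts μ c₀ C := by
  obtain ⟨η, hη, hN⟩ := meas_large h hμinf 1
  have low : ∀ ξ, 0 ≤ ξ → η ^ 2 * Real.exp (ξ * η) ≤ levyM μ 2 ξ := fun ξ hξ => by
    refine le_trans ?_ (M2_lower h hη hξ)
    exact le_mul_of_one_le_right (by positivity) hN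
  have low' : ∀ ξ, 0 ≤ ξ → η ^ 2 ≤ levyM μ 2 ξ := fun ξ hξ => by
    refine le_trans ?_ (low ξ hξ)
    exact le_mul_of_one_le_right (by positivity) (Real.one_le_exp (by positivity))
  refine ⟨η ^ 2, 1 + levyM μ 2 0 / η ^ 2, by positivity, ?_, low', ?_, ?_⟩
  · have := m2_nonneg μ 0
    have : 0 ≤ levyM μ 2 0 / η ^ 2 := by positivity
    linarith
  · intro a b ha hab
    have h1 : levyM μ 2 a ≤ levyM μ 2 b + levyM μ 2 0 := by
      rw [m2_eq, m2_eq, m2_eq, ← integral_add (h.i_two b) (h.i_two 0)]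
      refine integral_mono (h.i_two a) ((h.i_two b).add (h.i_two 0)) fun u => ?_
      simp only [Pi.add_apply]
      rw [← mul_add]
      refine mul_le_mul_of_nonneg_left ?_ (sq_nonneg _)
      rw [zero_mul, Real.exp_zero]
      rcases le_total 0 u with hu | hu
      · have : Real.exp (a * u) ≤ Real.exp (b * u) := by gcongr
        linarith
      · have : Real.exp (a * u) ≤ 1 := Real.exp_le_one_iff.2 (mul_nonpos_of_nonneg_of_nonpos ha hu)
        have := Real.exp_pos (b * u)
        linarith
    have h2 := low' b (ha.trans hab)
    have h3 := m2_nonneg μ 0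
    have : levyM μ 2 0 ≤ levyM μ 2 0 / η ^ 2 * levyM μ 2 b := by
      calc levyM μ 2 0 = levyM μ 2 0 / η ^ 2 * η ^ 2 := by field_simp
        _ ≤ _ := by gcongr
    linarith
  · have t : Tendsto (fun ξ : ℝ => η ^ 2 * Real.exp (ξ * η)) atTop atTop :=
      (Real.tendsto_exp_atTop.comp (tendsto_id.atTop_mul_const hη)).const_mul_atTop (by positivity)
    refine tendsto_atTop_mono' _ ?_ t
    filter_upwards [eventually_ge_atTop 0] with ξ hξ using low ξ hξ

lemma M4_mid {μ : Measure ℝ} (h : ExpInt μ) (X : ℝ) : ∃ C > 0, ∀ ξ, 0 ≤ ξ → ξ ≤ X →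
    levyM μ 4 ξ ≤ C := by
  have nn : 0 ≤ ∫ v, 2 * (v ^ 2 * Real.exp ((X + 1) * |v|)) ∂μ :=
    integral_nonneg fun v => by positivity
  refine ⟨(∫ v, 2 * (v ^ 2 * Real.exp ((X + 1) * |v|)) ∂μ) + 1, by linarith, fun ξ h0 h1 => ?_⟩
  have : levyM μ 4 ξ ≤ ∫ v, 2 * (v ^ 2 * Real.exp ((X + 1) * |v|)) ∂μ := by
    rw [m4_eq]
    refine integral_mono (h.i_four ξ) ((h (X + 1)).const_mul 2) fun v => ?_
    refine (four_bound ξ v).trans ?_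
    rw [abs_of_nonneg h0]
    gcongr
  linarith

section
variable {μ : Measure ℝ} [SigmaFinite μ] {lam : ℝ}

lemma nu2_nonneg_integrand (ζ s : ℝ) :
    0 ≤ Real.exp (lam * s) ^ 2 * levyM μ 2 (Real.exp (lam * s) * ζ) :=
  mul_nonneg (by positivity) (m2_nonneg _ _)

lemma nu2_mono (hlam : 0 < lam) (h : ExpInt μ) {c₀ C : ℝ} (hm : MFacts μ c₀ C) {a b : ℝ}
    (ha : 0 ≤ a) (hab : a ≤ b) : levyM (nuM μ lam) 2 a ≤ C * levyM (nuM μ lam) 2 b := by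
  rw [nu_m2 hlam h, nu_m2 hlam h, ← integral_const_mul]
  refine integral_mono (nu_i2 hlam h a) ((nu_i2 hlam h b).const_mul C) fun s => ?_
  have := hm.mono (Real.exp (lam * s) * a) (Real.exp (lam * s) * b) (by positivity) (by gcongr)
  calc _ ≤ Real.exp (lam * s) ^ 2 * (C * levyM μ 2 (Real.exp (lam * s) * b)) := by gcongr
    _ = _ := by ring

lemma nu2_window (hlam : 0 < lam) (h : ExpInt μ) {c₀ C : ℝ} (hm : MFacts μ c₀ C) {ζ s τ : ℝ}
    (hζ : 0 ≤ ζ) (hs : s ≤ 0) (hτ : 0 < τ) :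
    τ * (Real.exp (lam * (s - τ)) ^ 2 * levyM μ 2 (Real.exp (lam * (s - τ)) * ζ)) ≤
      C * levyM (nuM μ lam) 2 ζ := by
  rw [nu_m2 hlam h, ← integral_const_mul]
  have hr : (volume.restrict (Iic (0:ℝ))).real (Ioc (s - τ) s) = τ := by
    rw [measureReal_restrict_apply measurableSet_Ioc,
      inter_eq_left.2 (fun y hy => hy.2.trans hs), Real.volume_real_Ioc_of_le (by linarith)]
    ring
  have := lower_int (μ := volume.restrict (Iic (0:ℝ))) ((nu_i2 hlam h ζ).const_mul C)
    (Eventually.of_forall fun s => mul_nonneg (by linarith [hm.C0]) (nu2_nonneg_integrand ζ s))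
    (measurableSet_Ioc (a := s - τ) (b := s)) (by
      refine ((Measure.restrict_apply_le _ _).trans_lt ?_).ne
      simp)
    (Real.exp (lam * (s - τ)) ^ 2 * levyM μ 2 (Real.exp (lam * (s - τ)) * ζ))
    (Eventually.of_forall fun y hy => ?_)
  · rw [hr] at this
    rw [mul_comm]; exact this
  · have hy' : s - τ ≤ y := hy.1.le
    have h1 := hm.mono (Real.exp (lam * (s - τ)) * ζ) (Real.exp (lam * y) * ζ) (by positivity)
      (by gcongr)
    calc _ ≤ Real.exp (lam * y) ^ 2 * (C * levyM μ 2 (Real.exp (lam * y) * ζ)) := by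
          refine mul_le_mul ?_ h1 (m2_nonneg _ _) (by positivity)
          gcongr
      _ = _ := by ring

lemma nu_hb (hlam : 0 < lam) (h : ExpInt μ) {c₀ C : ℝ} (hm : MFacts μ c₀ C) :
    Tendsto (levyM (nuM μ lam) 2) atTop atTop := by
  have hC : 0 < C := by linarith [hm.C0]
  have t : Tendsto (fun ζ => C⁻¹ * (1 * (Real.exp (lam * (0 - 1)) ^ 2 *
      levyM μ 2 (Real.exp (lam * (0 - 1)) * ζ)))) atTop atTop := by
    refine Tendsto.const_mul_atTop (by positivity) (Tendsto.const_mul_atTop one_pos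
      (Tendsto.const_mul_atTop (by positivity) (hm.tend.comp ?_)))
    exact tendsto_id.const_mul_atTop (Real.exp_pos _)
  refine tendsto_atTop_mono' _ ?_ t
  filter_upwards [eventually_ge_atTop 0] with ζ hζ
  rw [inv_mul_le_iff₀ hC]
  exact nu2_window hlam h hm hζ le_rfl one_pos

lemma nu_ha (hlam : 0 < lam) (h : ExpInt μ) {c₀ C : ℝ} (hm : MFacts μ c₀ C)
    (γ : ℝ) (hγ : γ ∈ Set.Ioo (0 : ℝ) 1)
    (hT1 : Tendsto (fun ξ => levyM μ 4 ξ / (levyM μ 2 (γ * ξ)) ^ 2) atTop (nhds 0)) :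
    Tendsto (fun ζ => levyM (nuM μ lam) 4 ζ / (levyM (nuM μ lam) 2 ζ) ^ 2) atTop (nhds 0) := by
  have hC : 0 < C := by linarith [hm.C0]
  have hγ0 := hγ.1
  set τ := -Real.log γ / lam with hτ
  have τpos : 0 < τ := div_pos (neg_pos.2 (Real.log_neg hγ.1 hγ.2)) hlam
  set K := C / (τ * γ ^ 2) with hK
  have Kpos : 0 < K := by positivity
  -- window bound
  have B : ∀ ζ, 0 ≤ ζ → ∀ s, s ≤ 0 → Real.exp (lam * s) ^ 2 *
      levyM μ 2 (γ * (Real.exp (lam * s) * ζ)) ≤ K * levyM (nuM μ lam) 2 ζ := by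
    intro ζ hζ s hs
    have := nu2_window hlam h hm hζ hs τpos
    have e : Real.exp (lam * (s - τ)) = γ * Real.exp (lam * s) := by
      rw [mul_sub, Real.exp_sub, hτ, mul_div_cancel₀ _ hlam.ne', Real.exp_neg, Real.exp_log hγ0]
      field_simp
    rw [e, mul_assoc γ] at this
    rw [hK, div_mul_eq_mul_div, le_div_iff₀ (by positivity)]
    calc _ = τ * ((γ * Real.exp (lam * s)) ^ 2 * levyM μ 2 (γ * (Real.exp (lam * s) * ζ))) := by ring
      _ ≤ _ := this
  set D := ∫ s in Iic (0:ℝ), Real.exp (lam * s) with hD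
  have main : ∀ ε > 0, ∃ L > 0, ∀ ζ, 0 ≤ ζ → levyM (nuM μ lam) 4 ζ ≤
      ε * K * C * (levyM (nuM μ lam) 2 ζ) ^ 2 + L * D := by
    intro ε hε
    obtain ⟨X, hX⟩ := eventually_atTop.1 (hT1.eventually_le_const hε)
    obtain ⟨L, hL, hL'⟩ := M4_mid h X
    refine ⟨L, hL, fun ζ hζ => ?_⟩
    have b4 : ∀ ξ, 0 ≤ ξ → levyM μ 4 ξ ≤ ε * levyM μ 2 (γ * ξ) ^ 2 + L := by
      intro ξ hξ
      rcases le_total ξ X with hx | hx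
      · have := hL' ξ hξ hx
        have : 0 ≤ ε * levyM μ 2 (γ * ξ) ^ 2 := by positivity
        linarith
      · have h1 := hX ξ hx
        have h2 : 0 < levyM μ 2 (γ * ξ) := hm.c0.trans_le (hm.low _ (by positivity))
        rw [div_le_iff₀ (by positivity)] at h1
        linarith
    have iD : Integrable (fun s : ℝ => Real.exp (lam * s)) (volume.restrict (Iic (0:ℝ))) :=
      integrable_exp_Iic hlam
    have e1 : levyM (nuM μ lam) 4 ζ ≤ ε * K * levyM (nuM μ lam) 2 ζ * levyM (nuM μ lam) 2 (γ * ζ)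
        + L * D := by
      rw [nu_m4 hlam h, nu_m2 hlam h (γ * ζ), ← integral_const_mul, hD, ← integral_const_mul,
        ← integral_add ((nu_i2 hlam h (γ * ζ)).const_mul _) (iD.const_mul L)]
      refine integral_mono_of_nonneg (Eventually.of_forall fun s =>
        mul_nonneg (by positivity) (m4_nonneg _ _))
        (((nu_i2 hlam h (γ * ζ)).const_mul _).add (iD.const_mul L)) ?_
      refine (ae_restrict_iff' measurableSet_Iic).2 (Eventually.of_forall fun s hs => ?_)
      have hs' : s ≤ 0 := hs
      have hb := B ζ hζ s hs'
      have h4 := b4 (Real.exp (lam * s) * ζ) (by positivity)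
      have he : Real.exp (lam * s) ≤ 1 := Real.exp_le_one_iff.2 (by nlinarith)
      have hep := Real.exp_pos (lam * s)
      have he4 : Real.exp (lam * s) ^ 4 ≤ Real.exp (lam * s) := pow_le_of_le_one hep.le he (by norm_num)
      beta_reduce
      rw [show Real.exp (lam * s) * (γ * ζ) = γ * (Real.exp (lam * s) * ζ) by ring]
      set E := Real.exp (lam * s)
      set M := levyM μ 2 (γ * (E * ζ)) with hM
      have hMn : 0 ≤ M := m2_nonneg _ _
      calc E ^ 4 * levyM μ 4 (E * ζ) ≤ E ^ 4 * (ε * M ^ 2 + L) := by gcongr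
        _ = ε * (E ^ 2 * M) * (E ^ 2 * M) + L * E ^ 4 := by ring
        _ ≤ ε * (K * levyM (nuM μ lam) 2 ζ) * (E ^ 2 * M) + L * E := by gcongr
        _ = _ := by ring
    refine e1.trans ?_
    have h2 := nu2_mono hlam h hm (a := γ * ζ) (b := ζ) (by positivity)
      (mul_le_of_le_one_left hζ hγ.2.le)
    have h3 := m2_nonneg (nuM μ lam) ζ
    have : ε * K * levyM (nuM μ lam) 2 ζ * levyM (nuM μ lam) 2 (γ * ζ) ≤
        ε * K * levyM (nuM μ lam) 2 ζ * (C * levyM (nuM μ lam) 2 ζ) := by gcongr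
    linarith [this, show ε * K * levyM (nuM μ lam) 2 ζ * (C * levyM (nuM μ lam) 2 ζ) =
      ε * K * C * (levyM (nuM μ lam) 2 ζ) ^ 2 by ring]
  rw [Metric.tendsto_nhds]
  intro ε hε
  obtain ⟨L, hL, hL'⟩ := main (ε / (2 * K * C)) (by positivity)
  have t : Tendsto (fun ζ => (levyM (nuM μ lam) 2 ζ) ^ 2) atTop atTop :=
    (tendsto_pow_atTop (by norm_num)).comp (nu_hb hlam h hm)
  filter_upwards [eventually_ge_atTop 0, t.eventually_gt_atTop (2 * (L * D) / ε),
    (nu_hb hlam h hm).eventually_gt_atTop 0] with ζ h1 h2 h3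
  rw [Real.dist_eq, sub_zero, abs_of_nonneg (div_nonneg (m4_nonneg _ _) (sq_nonneg _)),
    div_lt_iff₀ (by positivity)]
  have := hL' ζ h1
  rw [div_lt_iff₀ hε] at h2
  have e : ε / (2 * K * C) * K * C = ε / 2 := by field_simp
  rw [e] at this
  linarith

lemma T2_parts {c₀ C : ℝ} (hm : MFacts μ c₀ C)
    (hT2 : Tendsto
      (fun ξ => (Real.log (max (levyM μ 4 ξ / levyM μ 2 ξ) 1)
        + Real.log (Real.log (levyM μ 2 ξ))) / ξ) atTop (nhds 0)) (ε : ℝ) (hε : 0 < ε) :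
    ∀ᶠ ξ in atTop, levyM μ 4 ξ ≤ Real.exp (ε * ξ) * levyM μ 2 ξ ∧
      levyM μ 2 ξ ≤ Real.exp (Real.exp (ε * ξ)) := by
  filter_upwards [hT2.eventually_le_const hε, eventually_gt_atTop 0,
    hm.tend.eventually_ge_atTop (Real.exp 1)] with ξ h1 h2 h3
  have hpos : 0 < levyM μ 2 ξ := (Real.exp_pos 1).trans_le h3
  have hl : 1 ≤ Real.log (levyM μ 2 ξ) := by rwa [Real.le_log_iff_exp_le hpos]
  rw [div_le_iff₀ h2] at h1
  have a : 0 ≤ Real.log (max (levyM μ 4 ξ / levyM μ 2 ξ) 1) := Real.log_nonneg (le_max_right _ _)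
  have b : 0 ≤ Real.log (Real.log (levyM μ 2 ξ)) := Real.log_nonneg hl
  constructor
  · have : Real.log (max (levyM μ 4 ξ / levyM μ 2 ξ) 1) ≤ ε * ξ := by linarith
    rw [Real.log_le_iff_le_exp (lt_of_lt_of_le one_pos (le_max_right _ _))] at this
    have := (le_max_left _ _).trans this
    rwa [div_le_iff₀ hpos] at this
  · have : Real.log (Real.log (levyM μ 2 ξ)) ≤ ε * ξ := by linarith
    rwa [Real.log_le_iff_le_exp (by linarith), Real.log_le_iff_le_exp hpos] at this

lemma nu_he1 (hlam : 0 < lam) (h : ExpInt μ) {c₀ C : ℝ} (hm : MFacts μ c₀ C)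
    (hT2 : Tendsto
      (fun ξ => (Real.log (max (levyM μ 4 ξ / levyM μ 2 ξ) 1)
        + Real.log (Real.log (levyM μ 2 ξ))) / ξ) atTop (nhds 0)) (ε : ℝ) (hε : 0 < ε) :
    ∀ᶠ ζ in atTop, levyM (nuM μ lam) 4 ζ ≤ Real.exp (ε * ζ) * levyM (nuM μ lam) 2 ζ := by
  obtain ⟨X, hX⟩ := eventually_atTop.1 (T2_parts hm hT2 (ε / 2) (by positivity))
  obtain ⟨L, hL, hL'⟩ := M4_mid h X
  have c0 := hm.c0
  have b4 : ∀ ξ, 0 ≤ ξ → levyM μ 4 ξ ≤ (1 + L / c₀) * Real.exp (ε / 2 * ξ) * levyM μ 2 ξ := by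
    intro ξ hξ
    have hlow := hm.low ξ hξ
    have hp : 0 ≤ Real.exp (ε / 2 * ξ) * levyM μ 2 ξ := mul_nonneg (Real.exp_pos _).le (by linarith)
    rcases le_total ξ X with hx | hx
    · have h1 := hL' ξ hξ hx
      have : L / c₀ * c₀ ≤ L / c₀ * (Real.exp (ε / 2 * ξ) * levyM μ 2 ξ) := by
        gcongr
        calc c₀ ≤ 1 * levyM μ 2 ξ := by linarith
          _ ≤ _ := by
            gcongr
            · linarith
            · exact Real.one_le_exp (by positivity)
      rw [div_mul_cancel₀ _ c0.ne'] at this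
      linarith
    · have h1 := (hX ξ hx).1
      have : 0 ≤ L / c₀ * (Real.exp (ε / 2 * ξ) * levyM μ 2 ξ) := by positivity
      linarith
  have t : Tendsto (fun ζ : ℝ => Real.exp (ε / 2 * ζ)) atTop atTop :=
    Real.tendsto_exp_atTop.comp (tendsto_id.const_mul_atTop (by positivity))
  filter_upwards [eventually_ge_atTop 0, t.eventually_ge_atTop (1 + L / c₀)] with ζ h1 h2
  rw [nu_m4 hlam h, nu_m2 hlam h, ← integral_const_mul]
  refine integral_mono_of_nonneg (Eventually.of_forall fun s =>
    mul_nonneg (by positivity) (m4_nonneg _ _)) ((nu_i2 hlam h ζ).const_mul _) ?_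
  refine (ae_restrict_iff' measurableSet_Iic).2 (Eventually.of_forall fun s hs => ?_)
  have hs' : s ≤ 0 := hs
  have he : Real.exp (lam * s) ≤ 1 := Real.exp_le_one_iff.2 (by nlinarith)
  have hep := Real.exp_pos (lam * s)
  have h4 := b4 (Real.exp (lam * s) * ζ) (by positivity)
  have e : Real.exp (ε * ζ) = Real.exp (ε / 2 * ζ) * Real.exp (ε / 2 * ζ) := by
    rw [← Real.exp_add]; congr 1; ring
  have hM := m2_nonneg μ (Real.exp (lam * s) * ζ)
  have e4 : Real.exp (lam * s) ^ 4 ≤ Real.exp (lam * s) ^ 2 :=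
    pow_le_pow_of_le_one hep.le he (by norm_num)
  have e5 : Real.exp (lam * s) * ζ ≤ ζ := mul_le_of_le_one_left h1 he
  calc _ ≤ Real.exp (lam * s) ^ 2 * ((1 + L / c₀) * Real.exp (ε / 2 * (Real.exp (lam * s) * ζ))
          * levyM μ 2 (Real.exp (lam * s) * ζ)) :=
        mul_le_mul e4 h4 (m4_nonneg _ _) (by positivity)
    _ ≤ Real.exp (lam * s) ^ 2 * (Real.exp (ε / 2 * ζ) * Real.exp (ε / 2 * ζ)
          * levyM μ 2 (Real.exp (lam * s) * ζ)) := by gcongr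
    _ = _ := by rw [e]; ring

lemma nu_he2 (hlam : 0 < lam) (h : ExpInt μ) {c₀ C : ℝ} (hm : MFacts μ c₀ C)
    (hT2 : Tendsto
      (fun ξ => (Real.log (max (levyM μ 4 ξ / levyM μ 2 ξ) 1)
        + Real.log (Real.log (levyM μ 2 ξ))) / ξ) atTop (nhds 0)) (ε : ℝ) (hε : 0 < ε) :
    ∀ᶠ ζ in atTop, levyM (nuM μ lam) 2 ζ ≤ Real.exp (Real.exp (ε * ζ)) := by
  have C0 : 0 < C := by linarith [hm.C0]
  set D := ∫ s in Iic (0:ℝ), Real.exp (lam * s) with hD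
  have iD : Integrable (fun s : ℝ => Real.exp (lam * s)) (volume.restrict (Iic (0:ℝ))) :=
    integrable_exp_Iic hlam
  have D0 : 0 ≤ D := integral_nonneg fun s => (Real.exp_pos _).le
  have t : Tendsto (fun ζ : ℝ => Real.exp (ε / 2 * ζ)) atTop atTop :=
    Real.tendsto_exp_atTop.comp (tendsto_id.const_mul_atTop (by positivity))
  have t2 : Tendsto (fun ζ : ℝ => Real.exp (Real.exp (ε / 2 * ζ))) atTop atTop :=
    Real.tendsto_exp_atTop.comp t
  filter_upwards [eventually_ge_atTop 0, t.eventually_ge_atTop 2, t2.eventually_ge_atTop (D * C),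
    T2_parts hm hT2 (ε / 2) (by positivity)] with ζ h1 h2 h3 h4
  have b : levyM (nuM μ lam) 2 ζ ≤ D * (C * levyM μ 2 ζ) := by
    rw [nu_m2 hlam h, hD, ← integral_mul_const]
    refine integral_mono_of_nonneg (Eventually.of_forall fun s => nu2_nonneg_integrand ζ s)
      (iD.mul_const _) ?_
    refine (ae_restrict_iff' measurableSet_Iic).2 (Eventually.of_forall fun s hs => ?_)
    have hs' : s ≤ 0 := hs
    have he : Real.exp (lam * s) ≤ 1 := Real.exp_le_one_iff.2 (by nlinarith)
    have hep := Real.exp_pos (lam * s)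
    refine mul_le_mul (pow_le_of_le_one hep.le he (by norm_num))
      (hm.mono _ _ (by positivity) (mul_le_of_le_one_left h1 he)) (m2_nonneg _ _) hep.le
  have e : Real.exp (ε * ζ) = Real.exp (ε / 2 * ζ) * Real.exp (ε / 2 * ζ) := by
    rw [← Real.exp_add]; congr 1; ring
  calc _ ≤ D * C * levyM μ 2 ζ := by rw [mul_assoc]; exact b
    _ ≤ Real.exp (Real.exp (ε / 2 * ζ)) * Real.exp (Real.exp (ε / 2 * ζ)) := by
        refine mul_le_mul h3 h4.2 (m2_nonneg _ _) (Real.exp_pos _).le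
    _ = Real.exp (2 * Real.exp (ε / 2 * ζ)) := by rw [← Real.exp_add]; congr 1; ring
    _ ≤ _ := by
        refine Real.exp_le_exp.2 ?_
        rw [e]
        gcongr

lemma zeta_tendsto (hlam : 0 < lam) (h : ExpInt μ) (ζ : ℝ → ℝ)
    (hζ : ∀ x : ℝ, 0 ≤ x → 0 ≤ ζ x ∧ levyM (nuM μ lam) 1 (ζ x) = x) : Tendsto ζ atTop atTop := by
  have hν := nu_expInt hlam h
  rw [tendsto_atTop]
  intro R
  filter_upwards [eventually_ge_atTop 0, eventually_gt_atTop (levyM (nuM μ lam) 1 R)] with x h0 h1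
  by_contra hlt
  push Not at hlt
  obtain ⟨a, b⟩ := hζ x h0
  have : levyM (nuM μ lam) 1 (ζ x) ≤ levyM (nuM μ lam) 1 R := by
    simp only [levyM]
    refine integral_mono (hν.i_one _) (hν.i_one _) fun v => ?_
    rcases le_total 0 v with hv | hv
    · have : Real.exp (ζ x * v) ≤ Real.exp (R * v) := by gcongr
      exact mul_le_mul_of_nonneg_left (by linarith) hv
    · have : Real.exp (R * v) ≤ Real.exp (ζ x * v) :=
        Real.exp_le_exp.2 (mul_le_mul_of_nonpos_right hlt.le hv)
      exact mul_le_mul_of_nonpos_left (by linarith) hv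
  linarith

end

lemma osc_int {b lam T : ℝ} (hb : 0 < b) (hlam : 0 < lam) (hT : 0 ≤ T) :
    T - 2 * Real.exp (lam * T) / (b * lam) ≤
      ∫ s in (-T)..0, (1 - Real.cos (b * Real.exp (lam * s))) := by
  set G : ℝ → ℝ := fun s => (Real.sin (b * Real.exp (lam * s)) - 1) * Real.exp (-(lam * s)) / (b * lam)
    with hG
  set G' : ℝ → ℝ := fun s => Real.cos (b * Real.exp (lam * s)) -
    (Real.sin (b * Real.exp (lam * s)) - 1) * Real.exp (-(lam * s)) / b with hG'
  have hd : ∀ s ∈ uIcc (-T) 0, HasDerivAt G (G' s) s := by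
    intro s _
    have h0 : HasDerivAt (fun s : ℝ => lam * s) lam s := by
      simpa using (hasDerivAt_id s).const_mul lam
    have h1 := (((h0.exp.const_mul b).sin.sub_const 1).mul h0.neg.exp).div_const (b * lam)
    refine HasDerivAt.congr_deriv (f' := _) h1 ?_
    simp only [hG', Pi.neg_apply]
    have : Real.exp (lam * s) * Real.exp (-(lam * s)) = 1 := by rw [← Real.exp_add]; simp
    field_simp
    linear_combination (Real.cos (b * Real.exp (lam * s))) * b * this
  have hc' : Continuous G' := by fun_prop
  have hi := intervalIntegral.integral_eq_sub_of_hasDerivAt hd (hc'.intervalIntegrable _ _)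
  have hle : ∫ s in (-T)..0, Real.cos (b * Real.exp (lam * s)) ≤ ∫ s in (-T)..0, G' s := by
    refine intervalIntegral.integral_mono_on (by linarith)
      ((by fun_prop : Continuous fun s => Real.cos (b * Real.exp (lam * s))).intervalIntegrable _ _)
      (hc'.intervalIntegrable _ _) fun s _ => ?_
    have h1 := Real.sin_le_one (b * Real.exp (lam * s))
    have h2 : 0 ≤ (1 - Real.sin (b * Real.exp (lam * s))) * Real.exp (-(lam * s)) / b :=
      div_nonneg (mul_nonneg (by linarith) (Real.exp_pos _).le) hb.le
    have : G' s = Real.cos (b * Real.exp (lam * s)) +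
      (1 - Real.sin (b * Real.exp (lam * s))) * Real.exp (-(lam * s)) / b := by
      simp only [hG']; ring
    linarith
  have g0 : G 0 ≤ 0 := by
    refine div_nonpos_of_nonpos_of_nonneg ?_ (by positivity)
    exact mul_nonpos_of_nonpos_of_nonneg (by linarith [Real.sin_le_one (b * Real.exp (lam * 0))])
      (Real.exp_pos _).le
  have gT : -(2 * Real.exp (lam * T) / (b * lam)) ≤ G (-T) := by
    simp only [hG]
    rw [← neg_div]
    refine div_le_div_of_nonneg_right ?_ (by positivity)
    rw [show -(lam * -T) = lam * T by ring]
    have := Real.neg_one_le_sin (b * Real.exp (lam * -T))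
    nlinarith [Real.exp_pos (lam * T)]
  rw [intervalIntegral.integral_sub (continuous_const.intervalIntegrable _ _)
    ((by fun_prop : Continuous fun s => Real.cos (b * Real.exp (lam * s))).intervalIntegrable _ _)]
  simp only [intervalIntegral.integral_const, smul_eq_mul]
  linarith

section
variable {μ : Measure ℝ} [SigmaFinite μ] {lam : ℝ}

lemma FF_low (hlam : 0 < lam) (h : ExpInt μ) {η : ℝ} (hη : 0 < η) (ζ z c : ℝ)
    (hc : ∀ u, η < u → ∃ a b : ℝ, a ≤ b ∧ b ≤ 0 ∧ c ≤ ∫ s in a..b,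
      (1 - Real.cos (z * (Real.exp (lam * s) * u))) * Real.exp (ζ * (Real.exp (lam * s) * u))) :
    c * μ.real (Ioi η) ≤ FF (nuM μ lam) ζ z := by
  have P := (prod_int (lam := lam) hlam h
    (by fun_prop : Continuous fun v => (1 - Real.cos (z * v)) * Real.exp (ζ * v))
    (z ^ 2 / 2) |ζ| (by positivity) (abs_nonneg _) (fun v => by
      rw [Real.norm_eq_abs, abs_of_nonneg (FF_nonneg' _ _ _)]
      exact FF_bound ζ z v))
  rw [nu_FF hlam h]
  refine lower_int P.integral_prod_right (Eventually.of_forall fun u =>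
    integral_nonneg fun s => FF_nonneg' _ _ _) measurableSet_Ioi (meas_fin h hη) c ?_
  filter_upwards [P.prod_left_ae] with u hu hun
  obtain ⟨a, b, hab, hb, hle⟩ := hc u hun
  refine hle.trans ?_
  rw [intervalIntegral.integral_of_le hab]
  exact setIntegral_mono_set hu (Eventually.of_forall fun s => FF_nonneg' _ _ _)
    (Eventually.of_forall fun s hs => (hs.2.trans hb : s ≤ 0))

lemma abs_cos_eq (z E u : ℝ) (hu : 0 ≤ u) : Real.cos (z * (E * u)) = Real.cos (|z| * u * E) := by
  rcases abs_choice z with h | h <;> rw [h]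
  · congr 1; ring
  · rw [← Real.cos_neg]; congr 1; ring

lemma inner_osc (hlam : 0 < lam) {ζ z u T δ : ℝ} (hu : 0 < u) (hz : z ≠ 0) (hT : 0 ≤ T) (hζ : 0 ≤ ζ)
    (hδ : δ ≤ Real.exp (-(lam * T)) * u) :
    Real.exp (δ * ζ) * (T - 2 * Real.exp (lam * T) / (|z| * u * lam)) ≤ ∫ s in (-T)..0,
      (1 - Real.cos (z * (Real.exp (lam * s) * u))) * Real.exp (ζ * (Real.exp (lam * s) * u)) := by
  have hz' : 0 < |z| := abs_pos.2 hz
  refine (mul_le_mul_of_nonneg_left (osc_int (b := |z| * u) (by positivity) hlam hT)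
    (Real.exp_pos _).le).trans ?_
  rw [← intervalIntegral.integral_const_mul]
  refine intervalIntegral.integral_mono_on (by linarith)
    ((by fun_prop : Continuous _).intervalIntegrable _ _)
    ((by fun_prop : Continuous _).intervalIntegrable _ _) fun s hs => ?_
  rw [abs_cos_eq z _ u hu.le, mul_comm]
  have : Real.exp (-(lam * T)) ≤ Real.exp (lam * s) := Real.exp_le_exp.2 (by nlinarith [hs.1])
  refine mul_le_mul_of_nonneg_left (Real.exp_le_exp.2 ?_) (by linarith [Real.cos_le_one (|z| * u * Real.exp (lam * s))])
  rw [mul_comm]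
  refine mul_le_mul_of_nonneg_left (hδ.trans ?_) hζ
  gcongr

lemma nu_hd (hlam : 0 < lam) (h : ExpInt μ) (hμinf : μ (Set.Ioi (0 : ℝ)) = ⊤) :
    DecayC (nuM μ lam) := by
  obtain ⟨η, hη, hN⟩ := meas_large h hμinf (4 * lam)
  refine ⟨Real.exp 4 * (1 + η ^ 2) / η ^ 2, by positivity, fun ζ hζ z => ?_⟩
  have hF0 := FF_nonneg (ν := nuM μ lam) ζ z
  rw [← div_eq_mul_inv, le_div_iff₀ (by positivity), le_div_iff₀ (by positivity)]
  have e1 : 1 ≤ Real.exp 4 := Real.one_le_exp (by norm_num)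
  by_cases hm : Real.exp 2 ≤ |z| * η
  · have hz0 : z ≠ 0 := by
      rintro rfl
      have := Real.exp_pos 2
      simp at hm; linarith
    have hz' : 0 < |z| := abs_pos.2 hz0
    set T := Real.log (|z| * η) / lam with hTd
    have hlog : 2 ≤ Real.log (|z| * η) := (Real.le_log_iff_exp_le (by positivity)).2 hm
    have hlT : lam * T = Real.log (|z| * η) := by rw [hTd]; field_simp
    have hT : 0 ≤ T := div_nonneg (by linarith) hlam.le
    have heT : Real.exp (lam * T) = |z| * η := by rw [hlT, Real.exp_log (by positivity)]
    have key : (T - 2 / lam) * μ.real (Ioi η) ≤ FF (nuM μ lam) ζ z := by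
      refine FF_low hlam h hη ζ z _ fun u hu => ⟨-T, 0, by linarith, le_rfl, ?_⟩
      have hu0 : 0 < u := hη.trans hu
      have := inner_osc hlam (ζ := ζ) (δ := 0) hu0 hz0 hT hζ (by positivity)
      refine le_trans ?_ this
      rw [zero_mul, Real.exp_zero, one_mul, heT]
      have : 2 * (|z| * η) / (|z| * u * lam) ≤ 2 / lam := by
        rw [div_le_div_iff₀ (by positivity) (by positivity)]
        have : |z| * η * lam ≤ |z| * u * lam := by gcongr
        linarith
      linarith
    have hT2 : 0 ≤ T - 2 / lam := by
      rw [hTd, ← sub_div]; exact div_nonneg (by linarith) hlam.le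
    have k2 : 4 * Real.log (|z| * η) - 8 ≤ FF (nuM μ lam) ζ z := by
      refine le_trans ?_ ((mul_le_mul_of_nonneg_left hN hT2).trans key)
      have : (T - 2 / lam) * (4 * lam) = 4 * (lam * T) - 8 := by field_simp; ring
      rw [this, hlT]
    have k3 : Real.exp (-FF (nuM μ lam) ζ z / 2) ≤ Real.exp 4 / (|z| * η) ^ 2 := by
      have : Real.exp 4 / (|z| * η) ^ 2 = Real.exp (4 - (Real.log (|z| * η) + Real.log (|z| * η))) := by
        rw [Real.exp_sub, Real.exp_add, Real.exp_log (by positivity), sq]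
      rw [this]
      exact Real.exp_le_exp.2 (by linarith)
    rw [mul_pow, sq_abs, le_div_iff₀ (by positivity)] at k3
    have hz1 : 1 ≤ z ^ 2 * η ^ 2 := by
      have : 1 ≤ |z| * η := (Real.one_le_exp (by norm_num)).trans hm
      have h2 : 1 ≤ (|z| * η) ^ 2 := one_le_pow₀ this
      rwa [mul_pow, sq_abs] at h2
    set e := Real.exp (-FF (nuM μ lam) ζ z / 2)
    have he : 0 < e := Real.exp_pos _
    have h5 : (1 + z ^ 2) * η ^ 2 ≤ (z ^ 2 * η ^ 2) * (1 + η ^ 2) := by nlinarith [sq_nonneg η]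
    calc e * (1 + z ^ 2) * η ^ 2 = e * ((1 + z ^ 2) * η ^ 2) := by ring
      _ ≤ e * ((z ^ 2 * η ^ 2) * (1 + η ^ 2)) := by gcongr
      _ = (e * (z ^ 2 * η ^ 2)) * (1 + η ^ 2) := by ring
      _ ≤ _ := by gcongr
  · push Not at hm
    have he : Real.exp (-FF (nuM μ lam) ζ z / 2) ≤ 1 := Real.exp_le_one_iff.2 (by linarith)
    have h2 : z ^ 2 * η ^ 2 ≤ Real.exp 4 := by
      have : (|z| * η) ^ 2 ≤ (Real.exp 2) ^ 2 := by gcongr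
      rw [mul_pow, sq_abs, ← Real.exp_nat_mul] at this
      norm_num at this; exact this
    calc Real.exp (-FF (nuM μ lam) ζ z / 2) * (1 + z ^ 2) * η ^ 2 ≤ 1 * (1 + z ^ 2) * η ^ 2 := by gcongr
      _ ≤ _ := by nlinarith [sq_nonneg η]

lemma nu_hF (hlam : 0 < lam) (h : ExpInt μ) (hμinf : μ (Set.Ioi (0 : ℝ)) = ⊤) :
    ∃ c > 0, ∃ δ > 0, ∀ ζ : ℝ, 0 ≤ ζ → ∀ z : ℝ,
      c * Real.exp (δ * ζ) * min 1 (z ^ 2) ≤ FF (nuM μ lam) ζ z := by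
  obtain ⟨η, hη, hN⟩ := meas_large h hμinf 1
  set c := (1 / lam) * min 1 (η ^ 2 * Real.exp (-3) ^ 2 / 8) with hcd
  have hcp : 0 < c := by positivity
  have hc1 : c ≤ 1 / lam := by
    rw [hcd]; exact mul_le_of_le_one_right (by positivity) (min_le_left _ _)
  have hc2 : c ≤ (1 / lam) * (η ^ 2 * Real.exp (-3) ^ 2 / 8) := by
    rw [hcd]; exact mul_le_mul_of_nonneg_left (min_le_right _ _) (by positivity)
  refine ⟨c, hcp, Real.exp (-3) * η, by positivity, fun ζ hζ z => ?_⟩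
  by_cases hz0 : z = 0
  · subst hz0; simp; exact FF_nonneg _ _
  have hz' : 0 < |z| := abs_pos.2 hz0
  set δ := Real.exp (-3) * η with hδ
  have hpos : 0 ≤ c * Real.exp (δ * ζ) * min 1 (z ^ 2) := by positivity
  refine (le_mul_of_one_le_right hpos hN).trans (FF_low hlam h hη ζ z _ fun u hu => ?_)
  have hu0 : 0 < u := hη.trans hu
  by_cases hb : 2 * Real.exp 2 ≤ |z| * u
  · have hT : 0 ≤ 2 / lam := by positivity
    refine ⟨-(2 / lam), 0, by linarith, le_rfl, ?_⟩
    have hl : lam * (2 / lam) = 2 := by field_simp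
    refine le_trans ?_ (inner_osc hlam (ζ := ζ) (δ := δ) hu0 hz0 hT hζ ?_)
    · rw [hl]
      have h1 : 2 * Real.exp 2 / (|z| * u * lam) ≤ 1 / lam := by
        rw [div_le_div_iff₀ (by positivity) hlam]; nlinarith
      have h2 : 1 / lam ≤ 2 / lam - 2 * Real.exp 2 / (|z| * u * lam) := by
        have : 2 / lam = 1 / lam + 1 / lam := by ring
        linarith
      calc c * Real.exp (δ * ζ) * min 1 (z ^ 2) ≤ c * Real.exp (δ * ζ) * 1 := by
            gcongr; exact min_le_left _ _
        _ = Real.exp (δ * ζ) * c := by ring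
        _ ≤ _ := mul_le_mul_of_nonneg_left (hc1.trans h2) (Real.exp_pos _).le
    · rw [hl, hδ]; gcongr; norm_num
  · push Not at hb
    have hlt : -(3 / lam) ≤ -(2 / lam) := by
      apply neg_le_neg; gcongr; norm_num
    refine ⟨-(3 / lam), -(2 / lam), hlt, by
      have : 0 ≤ 2 / lam := by positivity
      linarith, ?_⟩
    have hcst : c * Real.exp (δ * ζ) * min 1 (z ^ 2) ≤ ∫ s in (-(3 / lam))..(-(2 / lam)),
        (η ^ 2 * Real.exp (-3) ^ 2 / 8 * z ^ 2) * Real.exp (δ * ζ) := by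
      rw [intervalIntegral.integral_const, smul_eq_mul]
      have : -(2 / lam) - -(3 / lam) = 1 / lam := by ring
      rw [this]
      calc c * Real.exp (δ * ζ) * min 1 (z ^ 2) ≤
          (1 / lam) * (η ^ 2 * Real.exp (-3) ^ 2 / 8) * Real.exp (δ * ζ) * z ^ 2 := by
            gcongr; exact min_le_right _ _
        _ = _ := by ring
    refine hcst.trans ?_
    refine intervalIntegral.integral_mono_on hlt
      (continuous_const.intervalIntegrable _ _)
      ((by fun_prop : Continuous _).intervalIntegrable _ _) fun s hs => ?_
    rw [abs_cos_eq z _ u hu0.le]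
    have hs1 : -3 ≤ lam * s := by
      have := mul_le_mul_of_nonneg_left hs.1 hlam.le
      rw [mul_neg, mul_div_cancel₀ _ hlam.ne'] at this; exact this
    have hs2 : lam * s ≤ -2 := by
      have := mul_le_mul_of_nonneg_left hs.2 hlam.le
      rw [mul_neg, mul_div_cancel₀ _ hlam.ne'] at this; exact this
    have E1 : Real.exp (-3) ≤ Real.exp (lam * s) := Real.exp_le_exp.2 hs1
    have E2 : Real.exp (lam * s) ≤ Real.exp (-2) := Real.exp_le_exp.2 hs2
    set E := Real.exp (lam * s)
    have hE : 0 < E := Real.exp_pos _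
    have t1 : |z| * u * E ≤ 2 := by
      calc |z| * u * E ≤ (2 * Real.exp 2) * Real.exp (-2) := by gcongr
        _ = 2 := by rw [mul_assoc, ← Real.exp_add]; norm_num
    have t0 : |z| * η * Real.exp (-3) ≤ |z| * u * E := by gcongr
    have hcos : (|z| * u * E) ^ 2 / 8 ≤ 1 - Real.cos (|z| * u * E) := by
      have hp := Real.pi_gt_three
      have hp4 := Real.pi_le_four
      have := Real.cos_le_one_sub_mul_cos_sq (x := |z| * u * E) (by
        rw [abs_of_nonneg (by positivity)]; linarith)
      have h16 : 1 / 8 ≤ 2 / Real.pi ^ 2 := by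
        rw [div_le_div_iff₀ (by norm_num) (by positivity)]; nlinarith
      nlinarith [sq_nonneg (|z| * u * E)]
    have A1 : η ^ 2 * Real.exp (-3) ^ 2 / 8 * z ^ 2 ≤ 1 - Real.cos (|z| * u * E) := by
      refine le_trans ?_ hcos
      have : (|z| * η * Real.exp (-3)) ^ 2 ≤ (|z| * u * E) ^ 2 := by gcongr
      rw [mul_pow, mul_pow, sq_abs] at this
      linarith
    have A2 : Real.exp (δ * ζ) ≤ Real.exp (ζ * (E * u)) := by
      apply Real.exp_le_exp.2
      rw [mul_comm, hδ]; gcongr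
    exact mul_le_mul A1 A2 (Real.exp_pos _).le (by linarith [Real.cos_le_one (|z| * u * E)])

end

/-- Theorem 5.2: for the invariant density `p` of the Lévy driven
Ornstein–Uhlenbeck process, the ratio `r_a(x) = p(x+a)/p(x)` satisfies
`r_a(x) ∼ e^{−aζ(x)}` as `x → +∞`, uniformly in `a` in any bounded set. -/
theorem OU_invariant_density_ratio
    (μ : Measure ℝ)
    (hμ0 : μ {0} = 0)
    (hμint : Integrable (fun u : ℝ => min 1 (u ^ 2)) μ)
    (hμinf : μ (Set.Ioi (0 : ℝ)) = ⊤)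
    (hμexp : ∀ C : ℝ, Integrable (fun u : ℝ => Real.exp (C * u)) (μ.restrict {u : ℝ | 1 ≤ |u|}))
    (γ : ℝ) (hγ : γ ∈ Set.Ioo (0 : ℝ) 1)
    (hT1 : Tendsto (fun ξ => levyM μ 4 ξ / (levyM μ 2 (γ * ξ)) ^ 2) atTop (nhds 0))
    (hT2 : Tendsto
      (fun ξ => (Real.log (max (levyM μ 4 ξ / levyM μ 2 ξ) 1)
        + Real.log (Real.log (levyM μ 2 ξ))) / ξ) atTop (nhds 0))
    (lam : ℝ) (hlam : 0 < lam)
    (ζ : ℝ → ℝ)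
    (hζ : ∀ x : ℝ, 0 ≤ x → 0 ≤ ζ x ∧ ouM μ lam 1 (ζ x) = x)
    (p : ℝ → ℝ)
    (hp : ∀ x : ℝ, p x = (1 / (2 * Real.pi)) *
      (∫ z : ℝ, Complex.exp (Complex.I * (x : ℂ) * (z : ℂ) + ouPsi μ lam (z : ℂ))).re) :
    ∀ A : Set ℝ, Bornology.IsBounded A →
      ∀ ε > (0 : ℝ), ∃ X : ℝ, ∀ x : ℝ, X ≤ x → ∀ a ∈ A,
        |p (x + a) / p x * Real.exp (a * ζ x) - 1| < ε := by
  haveI := sigmaFinite_mu hμ0 hμint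
  have h := expInt_mu hμint hμexp
  obtain ⟨c₀, C, hm⟩ := mfacts h hμinf
  have g : Good (nuM μ lam) :=
    { h := nu_expInt hlam h
      hd := nu_hd hlam h hμinf
      ha := nu_ha hlam h hm γ hγ hT1
      hb := nu_hb hlam h hm
      hF := nu_hF hlam h hμinf
      he1 := fun ε hε => nu_he1 hlam h hm hT2 ε hε
      he2 := fun ε hε => nu_he2 hlam h hm hT2 ε hε }
  have hζ' : ∀ x : ℝ, 0 ≤ x → 0 ≤ ζ x ∧ levyM (nuM μ lam) 1 (ζ x) = x := by
    intro x hx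
    rw [nu_m1 hlam h]
    exact hζ x hx
  refine g.conclusion ζ hζ' (zeta_tendsto hlam h ζ hζ') p ?_
  intro x
  rw [hp x]
  simp_rw [nu_PS hlam h]
end

section
/- Let b ∈ ℝ and let f : (−∞, b] → (0,∞) be a positive convex function with ∫_{−∞}^b f(s)² ds < ∞. Set Υ(x) = ∫_{−∞}^b (1 − cos(x f(s))) ds. (i) If there exists γ > 0 such that e^{−γs} f(s) → +∞ as s → −∞, then there exist c > 0 and X > 0 such that Υ(x) ≥ c ln|x| for all |x| ≥ X. (ii) If e^{−γs} f(s) → +∞ as s → −∞ for every γ > 0, then for every c > 0 there exists X > 0 such that Υ(x) ≥ c ln|x| for all |x| ≥ X. -/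
open MeasureTheory Filter Set

lemma ck_not_bdd_below (b : ℝ) (f : ℝ → ℝ)
    (hf2int : IntegrableOn (fun s => f s ^ 2) (Set.Iic b))
    (ε a : ℝ) (hε : 0 < ε) (ha : a ≤ b) (h : ∀ s ≤ a, ε ≤ f s) : False := by
  have h1 : IntegrableOn (fun s => f s ^ 2) (Set.Iic a) :=
    hf2int.mono_set (Set.Iic_subset_Iic.2 ha)
  have h2 : IntegrableOn (fun _ : ℝ => ε ^ 2) (Set.Iic a) := by
    refine Integrable.mono' h1 aestronglyMeasurable_const ?_
    refine (ae_restrict_iff' measurableSet_Iic).2 (Eventually.of_forall fun s hs => ?_)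
    have := h s hs
    rw [Real.norm_eq_abs, abs_of_nonneg (by positivity)]
    gcongr
  rw [integrableOn_const_iff] at h2
  rcases h2 with h2 | h2
  · have : ε ^ 2 ≠ 0 := by positivity
    simp_all
  · simp at h2

lemma ck_strictMono (b : ℝ) (f : ℝ → ℝ)
    (hfpos : ∀ s ≤ b, 0 < f s)
    (hfconv : ConvexOn ℝ (Set.Iic b) f)
    (hf2int : IntegrableOn (fun s => f s ^ 2) (Set.Iic b)) :
    StrictMonoOn f (Set.Iic b) := by
  intro a ha c hc hac
  by_contra! hlt
  refine ck_not_bdd_below b f hf2int (f a) a (hfpos a ha) ha fun s hs => ?_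
  rcases hs.eq_or_lt with rfl | hs
  · exact le_rfl
  have h := hfconv.slope_mono_adjacent (Set.mem_Iic.2 (hs.le.trans ha)) hc hs hac
  by_contra! hcon
  have h1 : 0 < (f a - f s) / (a - s) := div_pos (by linarith) (by linarith)
  have h2 : (f c - f a) / (c - a) ≤ 0 := div_nonpos_of_nonpos_of_nonneg (by linarith) (by linarith)
  linarith

lemma ck_surj (b : ℝ) (f : ℝ → ℝ)
    (hfconv : ConvexOn ℝ (Set.Iic b) f)
    (hf2int : IntegrableOn (fun s => f s ^ 2) (Set.Iic b))
    (u : ℝ) (hu : 0 < u) (hub : u ≤ f (b - 1)) : ∃ s ≤ b - 1, f s = u := by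
  have hcont : ContinuousOn f (Set.Iio b) :=
    (hfconv.subset Set.Iio_subset_Iic_self (convex_Iio b)).continuousOn isOpen_Iio
  obtain ⟨a, ha, hfa⟩ : ∃ a ≤ b - 1, f a < u := by
    by_contra! h
    exact ck_not_bdd_below b f hf2int u (b - 1) hu (by linarith) h
  have := intermediate_value_Icc ha
    (hcont.mono fun s hs => Set.mem_Iio.2 (by linarith [hs.2]))
  obtain ⟨s, hs, hs'⟩ := this ⟨hfa.le, hub⟩
  exact ⟨s, hs.2, hs'⟩

lemma ck_integrable (b : ℝ) (f : ℝ → ℝ)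
    (hfpos : ∀ s ≤ b, 0 < f s)
    (hfconv : ConvexOn ℝ (Set.Iic b) f)
    (hf2int : IntegrableOn (fun s => f s ^ 2) (Set.Iic b)) (x : ℝ) :
    IntegrableOn (fun s => 1 - Real.cos (x * f s)) (Set.Iic b) := by
  have hm := aemeasurable_restrict_of_monotoneOn (μ := volume) measurableSet_Iic
    (ck_strictMono b f hfpos hfconv hf2int).monotoneOn
  refine Integrable.mono' (hf2int.const_mul (x ^ 2 / 2)) ?_ ?_
  · exact ((Real.measurable_cos.comp_aemeasurable
      (hm.const_mul x)).const_sub 1).aestronglyMeasurable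
  · refine Eventually.of_forall fun s => ?_
    have h1 := Real.cos_le_one (x * f s)
    have h2 := Real.one_sub_sq_div_two_le_cos (x := x * f s)
    rw [Real.norm_eq_abs, abs_of_nonneg (by linarith)]
    nlinarith

lemma ck_step (b : ℝ) (h : ℝ → ℝ) (hi : IntegrableOn h (Set.Iic b)) (m a c : ℝ)
    (hac : a ≤ c) (hc : c ≤ b) (hm : ∀ s ∈ Set.Icc a c, m ≤ h s) :
    (∫ s in Set.Iic a, h s) + m * (c - a) ≤ ∫ s in Set.Iic c, h s := by
  have hic := hi.mono_set (Set.Iic_subset_Iic.2 hc)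
  have hia := hi.mono_set (Set.Iic_subset_Iic.2 (hac.trans hc))
  have h1 := intervalIntegral.integral_Iic_sub_Iic hia hic
  have h2 : IntervalIntegrable h volume a c := by
    rw [intervalIntegrable_iff_integrableOn_Ioc_of_le hac]
    exact hic.mono_set Set.Ioc_subset_Iic_self
  have h3 := intervalIntegral.integral_mono_on hac
    (intervalIntegrable_const (c := m)) h2 hm
  rw [intervalIntegral.integral_const, smul_eq_mul] at h3
  linarith

lemma ck_ind (b : ℝ) (f : ℝ → ℝ)
    (hfpos : ∀ s ≤ b, 0 < f s)
    (hfconv : ConvexOn ℝ (Set.Iic b) f)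
    (hf2int : IntegrableOn (fun s => f s ^ 2) (Set.Iic b)) (x : ℝ) (hx : 0 < x)
    (p₀ : ℝ) (hp₀ : p₀ ≤ b - 1) (hfp₀ : x * f p₀ = Real.pi / 2) (m : ℕ) :
    ∀ p ≤ b - 1, x * f p = Real.pi / 2 + m * (2 * Real.pi) →
      (p - p₀) / 2 ≤ ∫ s in Set.Iic p, (1 - Real.cos (x * f s)) := by
  have hmono := ck_strictMono b f hfpos hfconv hf2int
  have hint := ck_integrable b f hfpos hfconv hf2int x
  have hpi := Real.pi_pos
  induction m with
  | zero =>
    intro p hp hfp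
    have : f p = f p₀ := by
      apply mul_left_cancel₀ hx.ne'
      rw [hfp, hfp₀]; simp
    have : p = p₀ := hmono.injOn (Set.mem_Iic.2 (by linarith)) (Set.mem_Iic.2 (by linarith)) this
    rw [this]
    simp only [sub_self, zero_div]
    exact integral_nonneg fun s => by
      have := Real.cos_le_one (x * f s)
      simp only [Pi.zero_apply]; linarith
  | succ m ih =>
    intro p hp hfp
    push_cast at hfp
    have hfpb : f p ≤ f (b - 1) :=
      hmono.monotoneOn (Set.mem_Iic.2 (by linarith)) (Set.mem_Iic.2 (by linarith)) hp
    have hm0 : (0:ℝ) ≤ m * (2 * Real.pi) := by positivity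
    have key : ∀ v, 0 < v → v ≤ x * f p → ∃ s ≤ b - 1, x * f s = v := by
      intro v hv hvp
      obtain ⟨s, hs, hs'⟩ := ck_surj b f hfconv hf2int (v / x) (by positivity)
        (by rw [div_le_iff₀ hx]; nlinarith)
      exact ⟨s, hs, by rw [hs']; field_simp⟩
    obtain ⟨q, hq, hfq⟩ := key (Real.pi / 2 + m * (2 * Real.pi) + Real.pi) (by linarith)
      (by linarith)
    obtain ⟨r, hr, hfr⟩ := key (Real.pi / 2 + m * (2 * Real.pi)) (by linarith) (by linarith)
    have hlt : ∀ y z, y ≤ b - 1 → z ≤ b - 1 → x * f y ≤ x * f z → y ≤ z := by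
      intro y z hy hz hyz
      exact (hmono.le_iff_le (Set.mem_Iic.2 (by linarith)) (Set.mem_Iic.2 (by linarith))).1
        (le_of_mul_le_mul_left hyz hx)
    have hrq : r ≤ q := hlt r q hr hq (by linarith)
    have hqp : q ≤ p := hlt q p hq hp (by linarith)
    have hmid : (1/2 : ℝ) * r + (1/2) * p ≤ q := by
      apply hlt _ _ (by linarith) hq
      have hrb : r ∈ Set.Iic b := Set.mem_Iic.2 (by linarith)
      have hpb : p ∈ Set.Iic b := Set.mem_Iic.2 (by linarith)
      have := hfconv.2 hrb hpb (show (0:ℝ) ≤ 1/2 by norm_num) (show (0:ℝ) ≤ 1/2 by norm_num)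
        (by norm_num)
      simp only [smul_eq_mul] at this
      nlinarith [mul_le_mul_of_nonneg_left this hx.le]
    have e1 := ih r hr hfr
    have e2 := ck_step b _ hint 1 r q hrq (by linarith) (by
      intro s hs
      have hsb : s ∈ Set.Iic b := Set.mem_Iic.2 (by linarith [hs.2])
      have h1 : f r ≤ f s := hmono.monotoneOn (Set.mem_Iic.2 (by linarith)) hsb hs.1
      have h2 : f s ≤ f q := hmono.monotoneOn hsb (Set.mem_Iic.2 (by linarith)) hs.2
      have h1' := mul_le_mul_of_nonneg_left h1 hx.le
      have h2' := mul_le_mul_of_nonneg_left h2 hx.le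
      have : Real.cos (x * f s - m * (2 * Real.pi)) ≤ 0 :=
        Real.cos_nonpos_of_pi_div_two_le_of_le (by linarith) (by linarith)
      rw [Real.cos_sub_nat_mul_two_pi] at this
      linarith)
    have e3 := ck_step b _ hint 0 q p hqp (by linarith) (by
      intro s hs
      have := Real.cos_le_one (x * f s)
      linarith)
    linarith

lemma ck_main (b : ℝ) (f : ℝ → ℝ)
    (hfpos : ∀ s ≤ b, 0 < f s)
    (hfconv : ConvexOn ℝ (Set.Iic b) f)
    (hf2int : IntegrableOn (fun s => f s ^ 2) (Set.Iic b))
    (γ : ℝ) (hγ : 0 < γ) (ht : Tendsto (fun s => Real.exp (-γ * s) * f s) atBot atTop) :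
    ∃ X > (0 : ℝ), ∀ x : ℝ, X ≤ x →
      1 / (4 * γ) * Real.log x ≤ ∫ s in Set.Iic b, (1 - Real.cos (x * f s)) := by
  have hmono := ck_strictMono b f hfpos hfconv hf2int
  have hpi := Real.pi_pos
  obtain ⟨S₀, hS₀⟩ := eventually_atBot.1 (ht.eventually_ge_atTop 1)
  set S := min S₀ (b - 1) with hS
  have hSb : S ≤ b - 1 := min_le_right _ _
  have hSpos : 0 < f S := hfpos S (by linarith)
  have hbpos : 0 < f (b - 1) := hfpos _ (by linarith)
  have hd : 0 < f (b - 1) - f (b - 2) := by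
    have := hmono (a := b - 2) (Set.mem_Iic.2 (by linarith)) (b := b - 1)
      (Set.mem_Iic.2 (by linarith)) (by linarith)
    linarith
  have hev : ∀ᶠ x : ℝ in atTop, 0 < x ∧ Real.pi / 2 ≤ x * f S ∧
      2 * Real.pi ≤ x * (f (b - 1) - f (b - 2)) ∧
      2 * (Real.log (Real.pi / 2) - γ * (b - 2)) ≤ Real.log x := by
    refine (eventually_gt_atTop 0).and (Eventually.and ?_ (Eventually.and ?_ ?_))
    · exact (tendsto_id.atTop_mul_const hSpos).eventually_ge_atTop _
    · exact (tendsto_id.atTop_mul_const hd).eventually_ge_atTop _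
    · exact Real.tendsto_log_atTop.eventually_ge_atTop _
  obtain ⟨X, hX⟩ := eventually_atTop.1 hev
  refine ⟨max X 1, by positivity, fun x hxX => ?_⟩
  obtain ⟨hx, h1, h2, h3⟩ := hX x ((le_max_left _ _).trans hxX)
  have hint := ck_integrable b f hfpos hfconv hf2int x
  have hfSb : f S ≤ f (b - 1) :=
    hmono.monotoneOn (Set.mem_Iic.2 (by linarith)) (Set.mem_Iic.2 (by linarith)) hSb
  have hSb' := mul_le_mul_of_nonneg_left hfSb hx.le
  have key : ∀ v, 0 < v → v ≤ x * f (b - 1) → ∃ s ≤ b - 1, x * f s = v := by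
    intro v hv hvp
    obtain ⟨s, hs, hs'⟩ := ck_surj b f hfconv hf2int (v / x) (by positivity)
      (by rw [div_le_iff₀ hx]; linarith)
    exact ⟨s, hs, by rw [hs']; field_simp⟩
  have hlt : ∀ y z, y ≤ b - 1 → z ≤ b - 1 → x * f y ≤ x * f z → y ≤ z := by
    intro y z hy hz hyz
    exact (hmono.le_iff_le (Set.mem_Iic.2 (by linarith)) (Set.mem_Iic.2 (by linarith))).1
      (le_of_mul_le_mul_left hyz hx)
  obtain ⟨p₀, hp₀, hfp₀⟩ := key (Real.pi / 2) (by positivity) (by linarith)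
  have hp₀S : p₀ ≤ S := hlt _ _ hp₀ hSb (by linarith)
  -- the last full period
  set m := ⌊(x * f (b - 1) - Real.pi / 2) / (2 * Real.pi)⌋₊ with hm
  have hm1 : (m : ℝ) * (2 * Real.pi) ≤ x * f (b - 1) - Real.pi / 2 := by
    rw [← le_div_iff₀ (by positivity)]
    exact Nat.floor_le (div_nonneg (by linarith) (by positivity))
  have hm2 : x * f (b - 1) - Real.pi / 2 < ((m : ℝ) + 1) * (2 * Real.pi) := by
    rw [← div_lt_iff₀ (by positivity)]
    exact Nat.lt_floor_add_one _
  have hm0 : (0:ℝ) ≤ m * (2 * Real.pi) := by positivity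
  obtain ⟨p, hp, hfp⟩ := key (Real.pi / 2 + m * (2 * Real.pi)) (by linarith) (by linarith)
  have hpb : b - 2 ≤ p := hlt _ _ (by linarith) hp (by linarith)
  have e1 := ck_ind b f hfpos hfconv hf2int x hx p₀ hp₀ hfp₀ m p hp hfp
  have e2 := ck_step b _ hint 0 p b (by linarith) le_rfl (by
    intro s hs
    have := Real.cos_le_one (x * f s)
    linarith)
  -- growth
  have hg := hS₀ p₀ (hp₀S.trans (min_le_left _ _))
  have hf0 : 0 < f p₀ := hfpos _ (by linarith)
  have hl1 := Real.log_le_log one_pos hg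
  rw [Real.log_one, Real.log_mul (Real.exp_ne_zero _) hf0.ne', Real.log_exp] at hl1
  have hl2 := congrArg Real.log hfp₀
  rw [Real.log_mul hx.ne' hf0.ne'] at hl2
  have hfin : 1 / (4 * γ) * Real.log x ≤ (b - 2 - p₀) / 2 := by
    rw [one_div, inv_mul_le_iff₀ (by positivity)]
    nlinarith
  linarith

/-- key inequality (ineq1) in Lemma 3.3, cases i = 3, 4: for a positive convex
square-integrable kernel `f` on `(−∞,b]`, with `Υ(x) = ∫_{−∞}^b (1 − cos(x f(s))) ds`:
(i) at most exponential decay of `f` at `−∞` gives `Υ(x) ≥ c ln|x|` for some `c > 0` and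
`|x|` large; (ii) subexponential decay gives it for every `c > 0`. -/
theorem convexKernel_log_lowerBound
    (b : ℝ) (f : ℝ → ℝ)
    (hfpos : ∀ s ≤ b, 0 < f s)
    (hfconv : ConvexOn ℝ (Set.Iic b) f)
    (hf2int : IntegrableOn (fun s => f s ^ 2) (Set.Iic b))
    (Υ : ℝ → ℝ)
    (hΥ : ∀ x : ℝ, Υ x = ∫ s in Set.Iic b, (1 - Real.cos (x * f s))) :
    ((∃ γ : ℝ, 0 < γ ∧ Tendsto (fun s => Real.exp (-γ * s) * f s) atBot atTop) →
      ∃ c > (0 : ℝ), ∃ X > (0 : ℝ), ∀ x : ℝ, X ≤ |x| → c * Real.log |x| ≤ Υ x) ∧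
    ((∀ γ : ℝ, 0 < γ → Tendsto (fun s => Real.exp (-γ * s) * f s) atBot atTop) →
      ∀ c > (0 : ℝ), ∃ X > (0 : ℝ), ∀ x : ℝ, X ≤ |x| → c * Real.log |x| ≤ Υ x) := by
  have hmain : ∀ γ : ℝ, 0 < γ → Tendsto (fun s => Real.exp (-γ * s) * f s) atBot atTop →
      ∃ X > (0 : ℝ), ∀ x : ℝ, X ≤ |x| → 1 / (4 * γ) * Real.log |x| ≤ Υ x := by
    intro γ hγ ht
    obtain ⟨X, hX, h⟩ := ck_main b f hfpos hfconv hf2int γ hγ ht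
    refine ⟨X, hX, fun x hx => ?_⟩
    have := h |x| hx
    rw [hΥ]
    rcases abs_choice x with h' | h'
    · rw [h'] at this ⊢; exact this
    · rw [h'] at this ⊢; simpa only [neg_mul, Real.cos_neg] using this
  constructor
  · rintro ⟨γ, hγ, ht⟩
    exact ⟨1 / (4 * γ), by positivity, hmain γ hγ ht⟩
  · intro ht c hc
    have := hmain (1 / (4 * c)) (by positivity) (ht _ (by positivity))
    have e : 1 / (4 * (1 / (4 * c))) = c := by field_simp
    rwa [e] at this
end
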